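/- arXiv:2110.07597 — 2 statements merged into one kernel-verified Lean document; each statement's English description precedes it below -/
import Mathlib

section
/- Let n ≥ 1, let λ/μ be a skew shape, let A = {1,…,r}, A′ = {1′,…,s′} be alphabets with a total order ≺ on A ∪ A′ refining both natural orders, and let N be an integer at least the number of parts of λ. Then the partition function of the n-ribbon lattice model system B_{λ/μ}(X/Y) — the grid with one row per letter of A ∪ A′ and λ_1 + N columns, boundary condition B_{λ/μ}, and row weights as specified — equals the super LLT polynomial: Z(B_{λ/μ}(X/Y)) = G_{λ/μ}(X/Y;q). -/
/-!
Encode a diagram `ν` by its Maya diagram, the set of beads `ν_t - t`. Adding an `n`-ribbon to `ν`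
moves one bead from a position `p` to `p + n`, where `p` is the content of the tail of the ribbon,
and the spin of the ribbon is the number of beads jumped over. The vertical edges of the lattice
model carry the Maya diagram of a partition (`diagBoundary_eq`), a label `<` on a horizontal edge
is a bead in flight, and the shift rule `v_E(i) = v_W(i+1)` says that a flight has length `n`.

Diagrams are handled through the function `bdry ν`, which gives for each content `d` the row of the
first cell of content `d` outside `ν`; its descents are the beads. A ribbon is a lattice path with
one cell for each of `n` consecutive contents (`IsRibbon.exists_path`).

*Strips.* A horizontal or vertical ribbon strip of shape `ν'/ν` is the same as a set `F` of
positions of moved beads satisfying `Valid`: no bead lands on a position occupied in `ν`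
(horizontal), or only beads of `ν` move (vertical). The tiling is recovered from `F` by stacking the
ribbons from left to right or from right to left (`Valid.stripTiling`,
`StripTiling.exists_valid`), and `F` is determined by `ν` and `ν'` (`Valid.unique`). Summing the
spins position by position (`Valid.sum_spin`) gives the exponent of `q` in closed form
(`rowT_of_valid`).

*Rows.* A row of the model with Maya diagram `ν` on top has nonzero weight only if its horizontal
labels describe a valid set of moves, and then the labels below are those of the resulting `ν'`
(`exists_valid_of_row`); its weight is the weight of the strip (`Valid.rowWeight`). Hence a single
row with `ν` above and `ν'` below has the generating function of the strips of shape `ν'/ν` as its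
partition function (`rowZ_diag`).

*Tableaux.* For fixed vertical labels the partition function is a product over rows
(`partitionZ_eq_sum_prod_rowZ`). A super tableau is the same as a chain of diagrams from `μ` to
`lam` with a strip tiling of each step (`prod_rowT`), so summing over all vertical labels gives the
super LLT polynomial (`partitionZ_eq_sum_tableaux`).
-/

open Finset

namespace SuperLLT

/-- Two cells in `ℕ × ℕ` are adjacent if they share an edge. -/
def Adj (c d : ℕ × ℕ) : Prop :=
  (c.1 = d.1 ∧ (c.2 + 1 = d.2 ∨ d.2 + 1 = c.2)) ∨
    (c.2 = d.2 ∧ (c.1 + 1 = d.1 ∨ d.1 + 1 = c.1))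

/-- A finite set of cells is connected if any two of its cells are joined by a path of
adjacent cells staying inside the set. -/
def ConnectedCells (s : Finset (ℕ × ℕ)) : Prop :=
  ∀ c ∈ s, ∀ d ∈ s, Relation.ReflTransGen (fun a b => a ∈ s ∧ b ∈ s ∧ Adj a b) c d

/-- A set of cells is (the set of cells of) a skew shape if it is the difference of two
Young diagrams. -/
def IsSkewCells (s : Finset (ℕ × ℕ)) : Prop :=
  ∃ μ lam : YoungDiagram, μ ≤ lam ∧ s = lam.cells \ μ.cells

/-- The set of cells contains no 2×2 square. -/
def NoTwoByTwo (s : Finset (ℕ × ℕ)) : Prop :=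
  ∀ i j : ℕ, ¬((i, j) ∈ s ∧ (i + 1, j) ∈ s ∧ (i, j + 1) ∈ s ∧ (i + 1, j + 1) ∈ s)

/-- An `n`-ribbon: a connected skew shape with `n` cells containing no 2×2 square. -/
def IsRibbon (n : ℕ) (s : Finset (ℕ × ℕ)) : Prop :=
  s.card = n ∧ IsSkewCells s ∧ ConnectedCells s ∧ NoTwoByTwo s

/-- The spin of a ribbon: its number of rows minus one. -/
def spin (s : Finset (ℕ × ℕ)) : ℕ :=
  (s.image Prod.fst).card - 1

/-- The top-right-most cell of a ribbon: minimal row index, maximal column in that row. -/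
def topRight (s : Finset (ℕ × ℕ)) : ℕ × ℕ :=
  ((s.image Prod.fst).min.getD 0,
    ((s.filter fun c => c.1 = (s.image Prod.fst).min.getD 0).image Prod.snd).max.getD 0)

/-- The bottom-left-most cell of a ribbon: maximal row index, minimal column in that row. -/
def bottomLeft (s : Finset (ℕ × ℕ)) : ℕ × ℕ :=
  ((s.image Prod.fst).max.getD 0,
    ((s.filter fun c => c.1 = (s.image Prod.fst).max.getD 0).image Prod.snd).min.getD 0)

/-- The cell `c` of the strip with cell set `strip` touches the northern boundary of the
strip: the cell directly above `c` is not a cell of the strip. -/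
def TouchesNorth (strip : Finset (ℕ × ℕ)) (c : ℕ × ℕ) : Prop :=
  c.1 = 0 ∨ (c.1 - 1, c.2) ∉ strip

/-- The cell `c` lies along the (upper-left) boundary of the strip: the cell directly to
the left of `c` is not a cell of the strip.  This is the condition on the bottom-left-most
box of each ribbon of a vertical ribbon strip (equivalently, flipping a vertical strip over
the antidiagonal produces a horizontal strip whose ribbon heads touch the northern
boundary). -/
def TouchesWest (strip : Finset (ℕ × ℕ)) (c : ℕ × ℕ) : Prop :=
  c.2 = 0 ∨ (c.1, c.2 - 1) ∉ strip

/-- `tiles` is a tiling of the cell set `cells` by `n`-ribbons. -/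
def IsTilingOf (n : ℕ) (cells : Finset (ℕ × ℕ)) (tiles : Finset (Finset (ℕ × ℕ))) : Prop :=
  (∀ t ∈ tiles, IsRibbon n t) ∧
    (∀ t ∈ tiles, ∀ t' ∈ tiles, t ≠ t' → Disjoint t t') ∧
    tiles.sup id = cells

/-- A horizontal `n`-ribbon strip tiling: the top-right-most box of every ribbon touches
the northern boundary of the strip. -/
def IsHorizontalTiling (n : ℕ) (cells : Finset (ℕ × ℕ))
    (tiles : Finset (Finset (ℕ × ℕ))) : Prop :=
  IsTilingOf n cells tiles ∧ ∀ t ∈ tiles, TouchesNorth cells (topRight t)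

/-- A vertical `n`-ribbon strip tiling: the bottom-left-most box of every ribbon lies on
the (north-west) boundary of the strip. -/
def IsVerticalTiling (n : ℕ) (cells : Finset (ℕ × ℕ))
    (tiles : Finset (Finset (ℕ × ℕ))) : Prop :=
  IsTilingOf n cells tiles ∧ ∀ t ∈ tiles, TouchesWest cells (bottomLeft t)

open scoped Classical in
/-- `T` is a super `n`-ribbon tableau of shape `lam / μ`: a set of `n`-ribbons, each
labelled by a letter of `L`, tiling `lam / μ`, such that for every letter `i` the union of
`μ` with the ribbons labelled `≼ i` (with respect to the total order `le` on `L`) is a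
partition shape, the ribbons with a fixed label `a` with `horiz a` form a horizontal
ribbon strip, and the ribbons with a fixed label `b` with `¬ horiz b` form a vertical
ribbon strip. -/
def IsSuperTableau (n : ℕ) (μ lam : YoungDiagram) {L : Type*}
    (le : L → L → Prop) (horiz : L → Prop) (T : Finset (Finset (ℕ × ℕ) × L)) : Prop :=
  μ ≤ lam ∧
    (∀ p ∈ T, IsRibbon n p.1) ∧
    (∀ p ∈ T, ∀ p' ∈ T, p ≠ p' → Disjoint p.1 p'.1) ∧
    (T.sup fun p => p.1) = lam.cells \ μ.cells ∧
    (∀ i : L, ∃ ν : YoungDiagram,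
      ν.cells = μ.cells ∪ ((T.filter fun p => le p.2 i).sup fun p => p.1)) ∧
    (∀ p ∈ T,
      (horiz p.2 →
        TouchesNorth ((T.filter fun p' => p'.2 = p.2).sup fun p' => p'.1) (topRight p.1)) ∧
      (¬horiz p.2 →
        TouchesWest ((T.filter fun p' => p'.2 = p.2).sup fun p' => p'.1) (bottomLeft p.1)))

open scoped Classical in
/-- The (finite) set of all super `n`-ribbon tableaux of shape `lam / μ` with letters in
`L`. -/
noncomputable def superTableaux (n : ℕ) (μ lam : YoungDiagram) (L : Type*) [Fintype L]
    (le : L → L → Prop) (horiz : L → Prop) : Finset (Finset (Finset (ℕ × ℕ) × L)) :=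
  ((lam.cells \ μ.cells).powerset ×ˢ (Finset.univ : Finset L)).powerset.filter
    (IsSuperTableau n μ lam le horiz)

/-- The spin of a tableau: the sum of the spins of its ribbons. -/
def tabSpin {L : Type*} (T : Finset (Finset (ℕ × ℕ) × L)) : ℕ :=
  ∑ p ∈ T, spin p.1

open scoped Classical in
/-- The number of ribbons of the tableau `T` labelled `a`. -/
noncomputable def tabWt {L : Type*} (T : Finset (Finset (ℕ × ℕ) × L)) (a : L) : ℕ :=
  (T.filter fun p => p.2 = a).card

open scoped Classical in
/-- The super LLT polynomial `G_{lam/μ}(X/Y; q)`, evaluated in a commutative ring `R`: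
`q` is the spin parameter and `z a` is the variable attached to the letter `a`; a ribbon
labelled by a horizontal letter `a` contributes a factor `z a`, and one labelled by a
vertical letter `b` contributes `-(z b)`.  (It is `0` if `¬ μ ≤ lam`.) -/
noncomputable def superLLT (n : ℕ) (μ lam : YoungDiagram) (L : Type*) [Fintype L]
    (le : L → L → Prop) (horiz : L → Prop) {R : Type*} [CommRing R] (q : R) (z : L → R) :
    R :=
  ∑ T ∈ superTableaux n μ lam L le horiz,
    q ^ tabSpin T * ∏ a : L, (if horiz a then z a else -z a) ^ tabWt T a

/-- The total order on `Fin r ⊕ Fin s` in which all letters of the first alphabet precede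
all letters of the second alphabet. -/
def sumLe {r s : ℕ} : Fin r ⊕ Fin s → Fin r ⊕ Fin s → Prop
  | Sum.inl i, Sum.inl j => i ≤ j
  | Sum.inl _, Sum.inr _ => True
  | Sum.inr _, Sum.inl _ => False
  | Sum.inr i, Sum.inr j => i ≤ j

end SuperLLT

namespace SuperLLT

/-- The six admissible vertex types of the `n`-ribbon lattice model. -/
inductive VertexType
  | SW | NS | SE | NW | EW | NE
  deriving DecidableEq

/-- Classify an admissible vertex by `(v_N, v_S, v_W(1), v_E(n))`, where on vertical
edges `true` stands for `∧` and on horizontal edges `true` stands for `<`: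
`SW = (∧,∧,>,>)`, `NS = (∨,∧,<,>)`, `SE = (∧,∧,<,<)`, `NW = (∨,∨,>,>)`,
`EW = (∧,∨,>,<)`, `NE = (∨,∨,<,<)`; all other configurations are inadmissible. -/
def classify : Bool → Bool → Bool → Bool → Option VertexType
  | true, true, false, false => some .SW
  | false, true, true, false => some .NS
  | true, true, true, true => some .SE
  | false, false, false, false => some .NW
  | true, false, false, true => some .EW
  | false, false, true, true => some .NE
  | _, _, _, _ => none

/-- A vertex of the `n`-ribbon lattice model is admissible if the labels do not change
along straight edges (`v_E(i) = v_W(i+1)` for `1 ≤ i ≤ n-1`) and as many arrows point in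
as out, i.e. `(v_N, v_S, v_W(1), v_E(n))` is one of the six admissible types.
Tuples are indexed by `Fin n`, with index `k` standing for position `k+1`. -/
def VertexAdmissible (n : ℕ) (vN vS : Bool) (vW vE : Fin n → Bool) : Prop :=
  ∃ h : 0 < n,
    (∀ k : Fin n, ∀ hk : k.val + 1 < n, vE k = vW ⟨k.val + 1, hk⟩) ∧
      (classify vN vS (vW ⟨0, h⟩) (vE ⟨n - 1, Nat.sub_lt h Nat.one_pos⟩)).isSome = true

/-- The Boltzmann weight of a single vertex, given a table `tab` assigning a weight to
each admissible vertex type and each value of `s(v)`, the number of `<` labels among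
`v_E(1), …, v_E(n-1)`.  Inadmissible vertices have weight `0`. -/
def vertexWeight {R : Type*} [CommRing R] (n : ℕ) (tab : VertexType → ℕ → R)
    (vN vS : Bool) (vW vE : Fin n → Bool) : R :=
  if h : 0 < n then
    if ∀ k : Fin n, ∀ hk : k.val + 1 < n, vE k = vW ⟨k.val + 1, hk⟩ then
      match classify vN vS (vW ⟨0, h⟩) (vE ⟨n - 1, Nat.sub_lt h Nat.one_pos⟩) with
      | some ty =>
          tab ty ((Finset.univ.filter fun k : Fin n => k.val < n - 1 ∧ vE k = true).card)
      | none => 0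
    else 0
  else 0

/-- Weights of a *horizontal-strip* row with spectral parameter `x` in the (original)
super ribbon lattice model:
`SW ↦ q^s`, `NS ↦ q^s`, `SE ↦ 0`, `NW ↦ 1`, `EW ↦ q^s x`, `NE ↦ q^s x`. -/
def horizTable {R : Type*} [CommRing R] (q x : R) : VertexType → ℕ → R
  | .SW, s => q ^ s
  | .NS, s => q ^ s
  | .SE, _ => 0
  | .NW, _ => 1
  | .EW, s => q ^ s * x
  | .NE, s => q ^ s * x

/-- Weights of a *vertical-strip* row with spectral parameter `y` in the (original)
super ribbon lattice model:
`SW ↦ q^s`, `NS ↦ 1`, `SE ↦ -y`, `NW ↦ 1`, `EW ↦ -y`, `NE ↦ 0`. -/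
def vertTable {R : Type*} [CommRing R] (q y : R) : VertexType → ℕ → R
  | .SW, s => q ^ s
  | .NS, _ => 1
  | .SE, _ => -y
  | .NW, _ => 1
  | .EW, _ => -y
  | .NE, _ => 0

/-- Weights of a horizontal-strip row with spectral parameter `x` in the *alternate*
super ribbon lattice model, where `t(v) = (n-1) - s(v)` is the number of `>` labels
among `v_E(1), …, v_E(n-1)`:
`SW ↦ 0`, `NS ↦ q^t x`, `SE ↦ q^t`, `NW ↦ q^t x`, `EW ↦ q^t`, `NE ↦ 1`. -/
def altHorizTable {R : Type*} [CommRing R] (n : ℕ) (q x : R) : VertexType → ℕ → R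
  | .SW, _ => 0
  | .NS, s => q ^ (n - 1 - s) * x
  | .SE, s => q ^ (n - 1 - s)
  | .NW, s => q ^ (n - 1 - s) * x
  | .EW, s => q ^ (n - 1 - s)
  | .NE, _ => 1

/-- Weights of a vertical-strip row with spectral parameter `y` in the *alternate*
super ribbon lattice model:
`SW ↦ -y`, `NS ↦ -y`, `SE ↦ q^t`, `NW ↦ 0`, `EW ↦ 1`, `NE ↦ 1`. -/
def altVertTable {R : Type*} [CommRing R] (n : ℕ) (q y : R) : VertexType → ℕ → R
  | .SW, _ => -y
  | .NS, _ => -y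
  | .SE, s => q ^ (n - 1 - s)
  | .NW, _ => 0
  | .EW, _ => 1
  | .NE, _ => 1

/-- A state of an `n`-ribbon lattice grid with `m` rows and `C` columns: a label in
`Bool` (`true = ∧`) on each vertical edge (`m+1` tiers of `C` columns, tier `0` being the
top boundary and tier `m` the bottom boundary) and an `n`-tuple of labels in `Bool`
(`true = <`) on each horizontal edge (`C+1` edges in each of the `m` rows, edge `0` being
the left boundary and edge `C` the right boundary). -/
abbrev GridState (n m C : ℕ) : Type :=
  (Fin (m + 1) → Fin C → Bool) × (Fin m → Fin (C + 1) → Fin n → Bool)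

/-- The Boltzmann weight of a state: the product of the weights of its vertices, row `r`
using the weight table `tab r`. -/
def stateWeight {R : Type*} [CommRing R] (n m C : ℕ) (tab : Fin m → VertexType → ℕ → R)
    (st : GridState n m C) : R :=
  ∏ r : Fin m, ∏ c : Fin C,
    vertexWeight n (tab r) (st.1 r.castSucc c) (st.1 r.succ c)
      (st.2 r c.castSucc) (st.2 r c.succ)

/-- The boundary condition: prescribed labels on the top, bottom, left and right
boundary edges. -/
def BoundaryCond {n m C : ℕ} (top bottom : Fin C → Bool)
    (left right : Fin m → Fin n → Bool) (st : GridState n m C) : Prop :=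
  st.1 0 = top ∧ st.1 (Fin.last m) = bottom ∧
    ∀ r : Fin m, st.2 r 0 = left r ∧ st.2 r (Fin.last C) = right r

open scoped Classical in
/-- The partition function of the lattice model: the sum of the weights of all states
with the given boundary condition. -/
noncomputable def partitionZ {R : Type*} [CommRing R] (n m C : ℕ)
    (tab : Fin m → VertexType → ℕ → R) (top bottom : Fin C → Bool)
    (left right : Fin m → Fin n → Bool) : R :=
  ∑ st ∈ Finset.univ.filter (BoundaryCond top bottom left right),
    stateWeight n m C tab st

/-- The boundary row of vertical-edge labels determined by `lam + ρ`, where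
`ρ = (N, N-1, …, 1)` and `lam` is padded with zeros to `N` parts: numbering the `C`
columns `1, …, C` from the left, column `c` carries `∧ = true` exactly if `c` is a part
of `lam + ρ`, i.e. of the form `lam_{t+1} + (N - t)` for some `0 ≤ t < N`. -/
def diagBoundary (lam : YoungDiagram) (N C : ℕ) : Fin C → Bool := fun c =>
  decide ((c.val + 1) ∈ (Finset.range N).image fun t => lam.rowLen t + (N - t))

end SuperLLT

namespace SuperLLT

/-! ### Young diagrams and their boundary functions -/

lemma exists_outside (ν : YoungDiagram) (d : ℤ) :
    ∃ i : ℕ, 0 ≤ (i : ℤ) + d ∧ (i, ((i : ℤ) + d).toNat) ∉ ν := by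
  refine ⟨ν.colLen 0 + d.natAbs, by omega, fun h => ?_⟩
  have h2 : (ν.colLen 0 + d.natAbs, 0) ∈ ν := ν.up_left_mem le_rfl (Nat.zero_le _) h
  rw [YoungDiagram.mem_iff_lt_colLen] at h2
  omega

/-- The boundary function of a Young diagram: `bdry ν d` is the row of the first cell of
content `d` (column minus row) outside `ν`.  Equivalently it is the number of indices `t`
with `ν_t - t > d`, i.e. the number of beads of the Maya diagram of `ν` to the right of `d`. -/
noncomputable def bdry (ν : YoungDiagram) (d : ℤ) : ℕ := by
  classical exact Nat.find (exists_outside ν d)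

lemma bdry_nonneg (ν : YoungDiagram) (d : ℤ) : 0 ≤ (bdry ν d : ℤ) + d := by
  classical exact (Nat.find_spec (exists_outside ν d)).1

lemma bdry_not_mem (ν : YoungDiagram) (d : ℤ) :
    (bdry ν d, ((bdry ν d : ℤ) + d).toNat) ∉ ν := by
  classical exact (Nat.find_spec (exists_outside ν d)).2

lemma mem_of_lt_bdry {ν : YoungDiagram} {d : ℤ} {i : ℕ} (h : i < bdry ν d)
    (hi : 0 ≤ (i : ℤ) + d) : (i, ((i : ℤ) + d).toNat) ∈ ν := by
  classical
  have := Nat.find_min (exists_outside ν d) h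
  by_contra hc
  exact this ⟨hi, hc⟩

lemma bdry_le {ν : YoungDiagram} {d : ℤ} {i : ℕ} (hi : 0 ≤ (i : ℤ) + d)
    (h : (i, ((i : ℤ) + d).toNat) ∉ ν) : bdry ν d ≤ i := by
  by_contra hc
  exact h (mem_of_lt_bdry (by omega) hi)

lemma mem_iff_bdry (ν : YoungDiagram) (i j : ℕ) :
    (i, j) ∈ ν ↔ i < bdry ν ((j : ℤ) - i) := by
  constructor
  · intro h
    by_contra hc
    refine bdry_not_mem ν ((j : ℤ) - i) (ν.up_left_mem (by omega) ?_ h)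
    omega
  · intro h
    have := mem_of_lt_bdry h (by omega)
    simpa using this

lemma bdry_succ_le (ν : YoungDiagram) (d : ℤ) : bdry ν (d + 1) ≤ bdry ν d := by
  have h0 := bdry_nonneg ν d
  refine bdry_le (by omega) fun h => bdry_not_mem ν d (ν.up_left_mem le_rfl ?_ h)
  omega

lemma bdry_le_succ (ν : YoungDiagram) (d : ℤ) : bdry ν d ≤ bdry ν (d + 1) + 1 := by
  have h0 := bdry_nonneg ν (d + 1)
  refine bdry_le (by push_cast; omega) fun h => bdry_not_mem ν (d + 1) (ν.up_left_mem ?_ ?_ h)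
  · omega
  · push_cast; omega

lemma bdry_anti (ν : YoungDiagram) {d d' : ℤ} (h : d ≤ d') : bdry ν d' ≤ bdry ν d :=
  antitone_int_of_succ_le (bdry_succ_le ν) h

/-- A function with the membership property and the lower bound of `bdry ν` is `bdry ν`. -/
lemma bdry_unique {ν : YoungDiagram} {g : ℤ → ℕ} (h0 : ∀ d, 0 ≤ (g d : ℤ) + d)
    (h : ∀ i j : ℕ, (i, j) ∈ ν ↔ i < g ((j : ℤ) - i)) : bdry ν = g := by
  funext d
  have hb := bdry_nonneg ν d
  have hg := h0 d
  by_contra hne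
  rcases Nat.lt_or_gt_of_ne hne with hlt | hlt
  · have h1 := (h (bdry ν d) (((bdry ν d : ℤ) + d).toNat))
    rw [show ((((bdry ν d : ℤ) + d).toNat : ℤ) - (bdry ν d : ℤ)) = d by omega] at h1
    exact bdry_not_mem ν d (h1.2 hlt)
  · have h1 := (h (g d) (((g d : ℤ) + d).toNat))
    rw [show ((((g d : ℤ) + d).toNat : ℤ) - (g d : ℤ)) = d by omega] at h1
    exact absurd (h1.1 (mem_of_lt_bdry hlt hg)) (lt_irrefl _)

lemma bdry_injective : Function.Injective bdry := by
  intro ν ν' h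
  ext ⟨i, j⟩
  rw [YoungDiagram.mem_cells, YoungDiagram.mem_cells, mem_iff_bdry, mem_iff_bdry, h]

/-- Every function with the steps and the asymptotics of a boundary function is one. -/
lemma exists_bdry_eq (g : ℤ → ℕ) (h0 : ∀ d, 0 ≤ (g d : ℤ) + d)
    (h1 : ∀ d, g (d + 1) ≤ g d) (h2 : ∀ d, g d ≤ g (d + 1) + 1)
    (hM : ∃ M : ℕ, g M = 0) (hN : ∃ N : ℕ, g (-N) = N) :
    ∃ ν : YoungDiagram, bdry ν = g := by
  obtain ⟨M, hM⟩ := hM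
  obtain ⟨N, hN⟩ := hN
  have anti : Antitone g := antitone_int_of_succ_le h1
  have mono2 : Monotone fun d : ℤ => (g d : ℤ) + d := by
    refine monotone_int_of_le_succ fun d => ?_
    have := h2 d
    omega
  let c : Finset (ℕ × ℕ) := (range (N + M) ×ˢ range (N + M)).filter
    fun x => x.1 < g ((x.2 : ℤ) - x.1)
  have hmem : ∀ i j : ℕ, (i, j) ∈ c ↔ i < g ((j : ℤ) - i) := by
    intro i j
    simp only [c, mem_filter, mem_product, mem_range, and_iff_right_iff_imp]
    intro h
    by_cases hi : i < N
    · refine ⟨by omega, ?_⟩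
      by_contra hj
      have := anti (show (M : ℤ) ≤ (j : ℤ) - i by omega)
      omega
    · exfalso
      have e1 := mono2 (show -(i : ℤ) ≤ -N by omega)
      have e2 := anti (show -(i : ℤ) ≤ (j : ℤ) - i by omega)
      simp only at e1
      omega
  have hc : IsLowerSet (c : Set (ℕ × ℕ)) := by
    rintro ⟨i, j⟩ ⟨i', j'⟩ hle h
    obtain ⟨hi, hj⟩ := Prod.mk_le_mk.1 hle
    rw [mem_coe, hmem] at h ⊢
    have e1 := anti (show (j' : ℤ) - i ≤ (j : ℤ) - i by omega)
    have e2 := mono2 (show (j' : ℤ) - i ≤ (j' : ℤ) - i' by omega)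
    simp only at e2
    omega
  exact ⟨⟨c, hc⟩, bdry_unique h0 fun i j => by
    rw [← YoungDiagram.mem_cells]; exact hmem i j⟩

lemma le_iff_bdry {ν ν' : YoungDiagram} : ν ≤ ν' ↔ ∀ d, bdry ν d ≤ bdry ν' d := by
  constructor
  · intro h d
    have h0 := bdry_nonneg ν' d
    refine bdry_le h0 fun hc => bdry_not_mem ν' d (h hc)
  · rintro h ⟨i, j⟩ hij
    have h1 := (mem_iff_bdry ν i j).1 hij
    exact (mem_iff_bdry ν' i j).2 (h1.trans_le (h _))

lemma mem_sdiff_iff_bdry {ν ν' : YoungDiagram} {i j : ℕ} :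
    (i, j) ∈ ν'.cells \ ν.cells ↔
      bdry ν ((j : ℤ) - i) ≤ i ∧ i < bdry ν' ((j : ℤ) - i) := by
  rw [mem_sdiff, YoungDiagram.mem_cells, YoungDiagram.mem_cells, mem_iff_bdry, mem_iff_bdry]
  omega

/-- The diagram `ν` has at most `N` rows and at most `M` columns. -/
def InBox (N M : ℕ) (ν : YoungDiagram) : Prop := (N, 0) ∉ ν ∧ (0, M) ∉ ν

lemma inBox_iff {N M : ℕ} {ν : YoungDiagram} :
    InBox N M ν ↔ bdry ν (-N) = N ∧ bdry ν M = 0 := by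
  have h0 := bdry_nonneg ν (-N)
  rw [InBox, mem_iff_bdry, mem_iff_bdry]
  simp only [CharP.cast_eq_zero, zero_sub, sub_zero]
  omega

lemma InBox.bdry_right {N M : ℕ} {ν : YoungDiagram} (h : InBox N M ν) {d : ℤ}
    (hd : (M : ℤ) ≤ d) : bdry ν d = 0 := by
  have := bdry_anti ν hd
  have := (inBox_iff.1 h).2
  omega

lemma InBox.bdry_left {N M : ℕ} {ν : YoungDiagram} (h : InBox N M ν) {d : ℤ}
    (hd : d ≤ -(N : ℤ)) : (bdry ν d : ℤ) = -d := by
  have h0 := bdry_nonneg ν d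
  have h1 : bdry ν d ≤ d.natAbs := by
    refine bdry_le (by omega) fun hc => h.1 (ν.up_left_mem ?_ (Nat.zero_le _) hc)
    omega
  omega

lemma InBox.mono {N M : ℕ} {ν ν' : YoungDiagram} (h : InBox N M ν') (hle : ν ≤ ν') :
    InBox N M ν :=
  ⟨fun hc => h.1 (hle hc), fun hc => h.2 (hle hc)⟩

lemma exists_inBox (ν : YoungDiagram) : ∃ N M : ℕ, InBox N M ν :=
  ⟨ν.colLen 0, ν.rowLen 0, by rw [YoungDiagram.mem_iff_lt_colLen]; simp,
    by rw [YoungDiagram.mem_iff_lt_rowLen]; simp⟩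

/-- `bead ν c` says that the Maya diagram of `ν` has a bead at content `c`, i.e. that
`c = ν_t - t` for some `t`. -/
def bead (ν : YoungDiagram) (c : ℤ) : Prop := bdry ν (c - 1) = bdry ν c + 1

noncomputable instance (ν : YoungDiagram) (c : ℤ) : Decidable (bead ν c) :=
  inferInstanceAs (Decidable (_ = _))

/-- The number of beads at `c`, zero or one. -/
noncomputable def beadN (ν : YoungDiagram) (c : ℤ) : ℕ := if bead ν c then 1 else 0

lemma bdry_pred (ν : YoungDiagram) (c : ℤ) : bdry ν (c - 1) = bdry ν c + beadN ν c := by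
  have h1 := bdry_succ_le ν (c - 1)
  have h2 := bdry_le_succ ν (c - 1)
  rw [sub_add_cancel] at h1 h2
  by_cases hb : bead ν c
  · rw [beadN, if_pos hb]
    exact hb
  · rw [beadN, if_neg hb]
    unfold bead at hb
    omega

lemma beadN_le_one (ν : YoungDiagram) (c : ℤ) : beadN ν c ≤ 1 := by
  unfold beadN; split_ifs <;> omega

/-- The boundary labels of the lattice model record the Maya diagram, column `c` (counted
from zero) corresponding to content `c + 1 - N`. -/
lemma diagBoundary_eq {N M C : ℕ} {ν : YoungDiagram} (h : InBox N M ν) (c : Fin C) :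
    diagBoundary ν N C c = decide (bead ν ((c : ℤ) + 1 - N)) := by
  unfold diagBoundary
  rw [decide_eq_decide]
  simp only [mem_image, mem_range]
  set d : ℤ := (c : ℤ) + 1 - N with hd
  constructor
  · rintro ⟨t, ht, hc⟩
    have e0 : (ν.rowLen t : ℤ) = t + d := by omega
    have e1 : bdry ν d ≤ t := by
      refine bdry_le (by omega) fun hm => ?_
      rw [YoungDiagram.mem_iff_lt_rowLen] at hm
      omega
    have e2 : t < bdry ν (d - 1) := by
      by_contra hcon
      have b0 := bdry_nonneg ν (d - 1)
      have b1 := bdry_not_mem ν (d - 1)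
      apply b1
      refine ν.up_left_mem (i2 := t) (j2 := ν.rowLen t - 1) (by omega) ?_ ?_
      · omega
      · rw [YoungDiagram.mem_iff_lt_rowLen]
        omega
    have := bdry_pred ν d
    have := beadN_le_one ν d
    unfold bead
    omega
  · intro hb
    unfold bead at hb
    have b0 := bdry_nonneg ν d
    have e3 : bdry ν (d - 1) ≤ N := by
      have := bdry_anti ν (show -(N : ℤ) ≤ d - 1 by omega)
      have := (inBox_iff.1 h).1
      omega
    refine ⟨bdry ν d, by omega, ?_⟩
    have e1 : ν.rowLen (bdry ν d) ≤ ((bdry ν d : ℤ) + d).toNat := by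
      have := bdry_not_mem ν d
      rw [YoungDiagram.mem_iff_lt_rowLen] at this
      omega
    have e2 : (bdry ν d : ℤ) + d ≤ ν.rowLen (bdry ν d) := by
      by_contra hcon
      have := mem_of_lt_bdry (ν := ν) (d := d - 1) (i := bdry ν d) (by omega) (by omega)
      rw [YoungDiagram.mem_iff_lt_rowLen] at this
      omega
    omega

/-! ### Ribbons as lattice paths -/

/-- `RibbonPath n s p ρ` says that `s` consists of exactly one cell on each of the `n`
diagonals of content `p, …, p + n - 1`, namely the one in row `ρ d` for content `d`, and that
consecutive ones are adjacent.  So `p` is the content of the bottom-left-most cell. -/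
structure RibbonPath (n : ℕ) (s : Finset (ℕ × ℕ)) (p : ℤ) (ρ : ℤ → ℕ) : Prop where
  mem : ∀ i j : ℕ, (i, j) ∈ s ↔ p ≤ (j : ℤ) - i ∧ (j : ℤ) - i < p + n ∧ i = ρ ((j : ℤ) - i)
  nonneg : ∀ d, p ≤ d → d < p + n → 0 ≤ (ρ d : ℤ) + d
  step : ∀ d, p ≤ d → d + 1 < p + n → ρ (d + 1) = ρ d ∨ ρ (d + 1) + 1 = ρ d

/-- The cell of content `d` of a ribbon path. -/
def pathCell (ρ : ℤ → ℕ) (d : ℤ) : ℕ × ℕ := (ρ d, ((ρ d : ℤ) + d).toNat)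

/-- A path of adjacent cells crosses from content `d` to content `d + 1` in a single step. -/
lemma exists_crossing {s : Finset (ℕ × ℕ)} {a b : ℕ × ℕ} {d : ℤ}
    (h : Relation.ReflTransGen (fun a b => a ∈ s ∧ b ∈ s ∧ Adj a b) a b)
    (ha : (a.2 : ℤ) - a.1 ≤ d) (hb : d < (b.2 : ℤ) - b.1) :
    ∃ x y : ℕ × ℕ, x ∈ s ∧ y ∈ s ∧ Adj x y ∧ (x.2 : ℤ) - x.1 = d ∧ (y.2 : ℤ) - y.1 = d + 1 := by
  induction h with
  | refl => omega
  | @tail x y hx hxy ih =>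
    by_cases hd : d < (x.2 : ℤ) - x.1
    · exact ih hd
    · refine ⟨x, y, hxy.1, hxy.2.1, hxy.2.2, ?_, ?_⟩ <;>
      · have := hxy.2.2
        unfold Adj at this
        omega

/-- A ribbon meets each diagonal at most once, by the absence of 2×2 squares. -/
lemma IsRibbon.content_inj {n : ℕ} {s : Finset (ℕ × ℕ)} (h : IsRibbon n s) {i j i' j' : ℕ}
    (h1 : (i, j) ∈ s) (h2 : (i', j') ∈ s) (he : (j : ℤ) - i = (j' : ℤ) - i') : i = i' := by
  obtain ⟨-, ⟨μ, lam, -, rfl⟩, -, h22⟩ := h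
  have key : ∀ i j i' j' : ℕ, (i, j) ∈ lam.cells \ μ.cells → (i', j') ∈ lam.cells \ μ.cells →
      (j : ℤ) - i = (j' : ℤ) - i' → ¬ i < i' := by
    intro i j i' j' h1 h2 he hlt
    apply h22 i j
    have h1' := mem_sdiff_iff_bdry.1 h1
    have h2' := mem_sdiff_iff_bdry.1 h2
    rw [← he] at h2'
    refine ⟨h1, mem_sdiff_iff_bdry.2 ?_, mem_sdiff_iff_bdry.2 ?_, mem_sdiff_iff_bdry.2 ?_⟩
    · rw [show (j : ℤ) - ((i + 1 : ℕ) : ℤ) = (j : ℤ) - i - 1 by push_cast; ring]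
      have e1 := bdry_pred μ ((j : ℤ) - i)
      have e2 := bdry_pred lam ((j : ℤ) - i)
      have e3 := beadN_le_one μ ((j : ℤ) - i)
      omega
    · rw [show (((j + 1 : ℕ) : ℤ)) - (i : ℤ) = (j : ℤ) - i + 1 by push_cast; ring]
      have e1 := bdry_succ_le μ ((j : ℤ) - i)
      have e2 := bdry_le_succ lam ((j : ℤ) - i)
      omega
    · rw [show (((j + 1 : ℕ) : ℤ)) - ((i + 1 : ℕ) : ℤ) = (j : ℤ) - i by push_cast; ring]
      omega
  have k1 := key i j i' j' h1 h2 he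
  have k2 := key i' j' i j h2 h1 he.symm
  omega

lemma IsRibbon.exists_path {n : ℕ} (hn : 1 ≤ n) {s : Finset (ℕ × ℕ)} (h : IsRibbon n s) :
    ∃ p ρ, RibbonPath n s p ρ := by
  classical
  have inj := @IsRibbon.content_inj n s h
  obtain ⟨hcard, -, hconn, -⟩ := h
  let f : ℕ × ℕ → ℤ := fun c => (c.2 : ℤ) - c.1
  have hinj : Set.InjOn f s := by
    rintro ⟨i, j⟩ h1 ⟨i', j'⟩ h2 he
    simp only [f] at he
    have := inj h1 h2 he
    ext <;> simp only <;> omega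
  have hKc : (s.image f).card = n := by rw [card_image_of_injOn hinj, hcard]
  have hKne : (s.image f).Nonempty := by rw [← card_pos]; omega
  obtain ⟨a, ha, hap⟩ := mem_image.1 ((s.image f).min'_mem hKne)
  obtain ⟨b, hb, hbp⟩ := mem_image.1 ((s.image f).max'_mem hKne)
  -- connectedness makes the set of contents an interval
  have hKI : s.image f = Icc (f a) (f b) := by
    ext d
    rw [mem_Icc]
    constructor
    · intro hd
      rw [hap, hbp]
      exact ⟨min'_le _ _ hd, le_max' _ _ hd⟩
    · rintro ⟨h1, h2⟩
      rcases eq_or_lt_of_le h2 with rfl | h2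
      · exact mem_image_of_mem f hb
      · obtain ⟨x, y, hx, -, -, hxd, -⟩ := exists_crossing (hconn a ha b hb) h1 h2
        exact mem_image.2 ⟨x, hx, hxd⟩
  have hab : f b = f a + n - 1 := by
    have h1 : f a ≤ f b := by
      have := mem_image_of_mem f ha
      rw [hKI, mem_Icc] at this
      exact this.2
    rw [hKI, Int.card_Icc] at hKc
    omega
  have hex : ∀ d : ℤ, ∃ i : ℕ, f a ≤ d → d < f a + n → ∃ j : ℕ, (i, j) ∈ s ∧ (j : ℤ) - i = d := by
    intro d
    by_cases hd : f a ≤ d ∧ d < f a + n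
    · have : d ∈ s.image f := by rw [hKI, mem_Icc]; omega
      obtain ⟨⟨i, j⟩, hx, hxd⟩ := mem_image.1 this
      exact ⟨i, fun _ _ => ⟨j, hx, hxd⟩⟩
    · exact ⟨0, fun h1 h2 => absurd ⟨h1, h2⟩ hd⟩
  choose ρ hρ using hex
  refine ⟨f a, ρ, ?_, ?_, ?_⟩
  · intro i j
    constructor
    · intro hij
      have : f (i, j) ∈ s.image f := mem_image_of_mem f hij
      rw [hKI, mem_Icc] at this
      simp only [f] at this hab ⊢
      obtain ⟨j', hj', e⟩ := hρ ((j : ℤ) - i) this.1 (by simp only [f]; omega)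
      exact ⟨by omega, by omega, inj hij hj' e.symm⟩
    · rintro ⟨h1, h2, h3⟩
      obtain ⟨j', hj', e⟩ := hρ _ h1 h2
      rw [← h3] at hj' e
      have : j' = j := by omega
      rwa [this] at hj'
  · intro d h1 h2
    obtain ⟨j, -, e⟩ := hρ d h1 h2
    omega
  · intro d h1 h2
    obtain ⟨j, hj, e⟩ := hρ d h1 (by omega)
    obtain ⟨j', hj', e'⟩ := hρ (d + 1) (by omega) h2
    obtain ⟨⟨xi, xj⟩, ⟨yi, yj⟩, hx, hy, hadj, hxd, hyd⟩ :=
      exists_crossing (d := d) (hconn _ hj _ hj') (by simp only; omega) (by simp only; omega)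
    simp only at hxd hyd
    have q1 := inj hj hx (by omega)
    have q2 := inj hj' hy (by omega)
    unfold Adj at hadj
    simp only at hadj
    omega

namespace RibbonPath

variable {n : ℕ} {s : Finset (ℕ × ℕ)} {p : ℤ} {ρ : ℤ → ℕ}

lemma cell_mem (h : RibbonPath n s p ρ) {d : ℤ} (h1 : p ≤ d) (h2 : d < p + n) :
    pathCell ρ d ∈ s := by
  have h0 := h.nonneg d h1 h2
  rw [pathCell, h.mem]
  rw [show ((((ρ d : ℤ) + d).toNat : ℤ) - (ρ d : ℤ)) = d by omega]
  exact ⟨h1, h2, rfl⟩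

lemma anti (h : RibbonPath n s p ρ) {d d' : ℤ} (h1 : p ≤ d) (h2 : d ≤ d') (h3 : d' < p + n) :
    ρ d' ≤ ρ d := by
  induction d', h2 using Int.leInduction with
  | base => rfl
  | succ k hk ih =>
    have := h.step k (by omega) h3
    have := ih (by omega)
    omega

lemma eq_image (h : RibbonPath n s p ρ) : s = (Ico p (p + n)).image (pathCell ρ) := by
  ext ⟨i, j⟩
  rw [mem_image]
  constructor
  · intro hij
    obtain ⟨h1, h2, h3⟩ := (h.mem i j).1 hij
    refine ⟨(j : ℤ) - i, mem_Ico.2 ⟨h1, h2⟩, ?_⟩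
    rw [pathCell, ← h3]
    simp
  · rintro ⟨d, hd, e⟩
    rw [← e]
    rw [mem_Ico] at hd
    exact h.cell_mem hd.1 hd.2

lemma nonempty (hn : 1 ≤ n) (h : RibbonPath n s p ρ) : s.Nonempty :=
  ⟨_, h.cell_mem le_rfl (by omega)⟩

lemma isRibbon (h : RibbonPath n s p ρ) (hs : IsSkewCells s) : IsRibbon n s := by
  refine ⟨?_, hs, ?_, ?_⟩
  · rw [h.eq_image, card_image_of_injOn, Int.card_Ico]
    · simp
    · intro d hd d' hd' he
      rw [mem_coe, mem_Ico] at hd hd'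
      have e1 := h.nonneg d hd.1 hd.2
      have e2 := h.nonneg d' hd'.1 hd'.2
      simp only [pathCell, Prod.mk.injEq] at he
      omega
  · have hsymm : Std.Symm (fun a b => a ∈ s ∧ b ∈ s ∧ Adj a b) := by
      refine ⟨fun a b => ?_⟩
      rintro ⟨h1, h2, h3⟩
      refine ⟨h2, h1, ?_⟩
      unfold Adj at h3 ⊢
      omega
    have key : ∀ d, p ≤ d → d < p + n →
        Relation.ReflTransGen (fun a b => a ∈ s ∧ b ∈ s ∧ Adj a b) (pathCell ρ p)
          (pathCell ρ d) := by
      intro d hd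
      induction d, hd using Int.leInduction with
      | base => intro _; exact Relation.ReflTransGen.refl
      | succ k hk ih =>
        intro hk2
        refine (ih (by omega)).tail ⟨h.cell_mem hk (by omega), h.cell_mem (by omega) hk2, ?_⟩
        have e1 := h.nonneg k hk (by omega)
        have e2 := h.nonneg (k + 1) (by omega) hk2
        have e3 := h.step k hk hk2
        simp only [Adj, pathCell]
        omega
    intro c hc d hd
    rw [h.eq_image, mem_image] at hc hd
    obtain ⟨c, hc, rfl⟩ := hc
    obtain ⟨d, hd, rfl⟩ := hd
    rw [mem_Ico] at hc hd
    exact (Relation.ReflTransGen.stdSymm.symm _ _ (key c hc.1 hc.2)).trans (key d hd.1 hd.2)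
  · rintro i j ⟨h1, -, -, h4⟩
    rw [h.mem] at h1 h4
    rw [show (((j + 1 : ℕ) : ℤ)) - ((i + 1 : ℕ) : ℤ) = (j : ℤ) - i by push_cast; ring] at h4
    omega

end RibbonPath

lemma min_getD_eq {A : Finset ℕ} {a : ℕ} (ha : a ∈ A) (h : ∀ b ∈ A, a ≤ b) :
    A.min.getD 0 = a := by
  have : A.min = (a : WithTop ℕ) :=
    le_antisymm (Finset.min_le ha) (Finset.le_min fun b hb => WithTop.coe_le_coe.2 (h b hb))
  rw [this]
  rfl

lemma max_getD_eq {A : Finset ℕ} {a : ℕ} (ha : a ∈ A) (h : ∀ b ∈ A, b ≤ a) :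
    A.max.getD 0 = a := by
  have : A.max = (a : WithBot ℕ) :=
    le_antisymm (Finset.max_le fun b hb => WithBot.coe_le_coe.2 (h b hb)) (Finset.le_max ha)
  rw [this]
  rfl

namespace RibbonPath

variable {n : ℕ} {s : Finset (ℕ × ℕ)} {p : ℤ} {ρ : ℤ → ℕ}

lemma topRight_eq (hn : 1 ≤ n) (h : RibbonPath n s p ρ) :
    topRight s = pathCell ρ (p + n - 1) := by
  have hm := h.cell_mem (d := p + n - 1) (by omega) (by omega)
  have h0 := h.nonneg (p + n - 1) (by omega) (by omega)
  have hrow : (s.image Prod.fst).min.getD 0 = ρ (p + n - 1) := by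
    apply min_getD_eq
    · exact mem_image.2 ⟨_, hm, rfl⟩
    · rintro b hb
      obtain ⟨⟨i, j⟩, hij, rfl⟩ := mem_image.1 hb
      obtain ⟨h1, h2, h3⟩ := (h.mem i j).1 hij
      have := h.anti h1 (show (j : ℤ) - i ≤ p + n - 1 by omega) (by omega)
      simp only
      omega
  unfold topRight
  rw [hrow, pathCell]
  congr 1
  apply max_getD_eq
  · exact mem_image.2 ⟨_, mem_filter.2 ⟨hm, rfl⟩, rfl⟩
  · rintro b hb
    obtain ⟨⟨i, j⟩, hij, rfl⟩ := mem_image.1 hb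
    obtain ⟨hij, hi⟩ := mem_filter.1 hij
    obtain ⟨h1, h2, h3⟩ := (h.mem i j).1 hij
    simp only at hi ⊢
    omega

lemma bottomLeft_eq (hn : 1 ≤ n) (h : RibbonPath n s p ρ) :
    bottomLeft s = pathCell ρ p := by
  have hm := h.cell_mem (d := p) (by omega) (by omega)
  have h0 := h.nonneg p (by omega) (by omega)
  have hrow : (s.image Prod.fst).max.getD 0 = ρ p := by
    apply max_getD_eq
    · exact mem_image.2 ⟨_, hm, rfl⟩
    · rintro b hb
      obtain ⟨⟨i, j⟩, hij, rfl⟩ := mem_image.1 hb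
      obtain ⟨h1, h2, h3⟩ := (h.mem i j).1 hij
      have := h.anti le_rfl h1 h2
      simp only
      omega
  unfold bottomLeft
  rw [hrow, pathCell]
  congr 1
  apply min_getD_eq
  · exact mem_image.2 ⟨_, mem_filter.2 ⟨hm, rfl⟩, rfl⟩
  · rintro b hb
    obtain ⟨⟨i, j⟩, hij, rfl⟩ := mem_image.1 hb
    obtain ⟨hij, hi⟩ := mem_filter.1 hij
    obtain ⟨h1, h2, h3⟩ := (h.mem i j).1 hij
    simp only at hi ⊢
    omega

lemma spin_eq (hn : 1 ≤ n) (h : RibbonPath n s p ρ) :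
    spin s = ρ p - ρ (p + n - 1) := by
  have key : ∀ d, p ≤ d → d < p + n → ∀ r, ρ d ≤ r → r ≤ ρ p →
      ∃ d', p ≤ d' ∧ d' < p + n ∧ ρ d' = r := by
    intro d hd
    induction d, hd using Int.leInduction with
    | base => intro h1 r h2 h3; exact ⟨p, le_rfl, h1, by omega⟩
    | succ k hk ih =>
      intro h1 r h2 h3
      by_cases hr : ρ k ≤ r
      · exact ih (by omega) r hr h3
      · have := h.step k hk h1
        exact ⟨k + 1, by omega, h1, by omega⟩
  have himg : s.image Prod.fst = Icc (ρ (p + n - 1)) (ρ p) := by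
    ext r
    rw [mem_Icc]
    constructor
    · intro hr
      obtain ⟨⟨i, j⟩, hij, rfl⟩ := mem_image.1 hr
      obtain ⟨h1, h2, h3⟩ := (h.mem i j).1 hij
      have e1 := h.anti le_rfl h1 h2
      have e2 := h.anti h1 (show (j : ℤ) - i ≤ p + n - 1 by omega) (by omega)
      simp only
      omega
    · rintro ⟨h1, h2⟩
      obtain ⟨d, hd1, hd2, hd3⟩ := key (p + n - 1) (by omega) (by omega) r h1 h2
      exact mem_image.2 ⟨_, h.cell_mem hd1 hd2, hd3⟩
  have := h.anti le_rfl (show p ≤ p + n - 1 by omega) (by omega)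
  rw [spin, himg, Nat.card_Icc]
  omega

end RibbonPath

/-! ### Strips of ribbons as sets of bead moves -/

/-- The number of `p ∈ F` such that the ribbon with contents `p, …, p + n - 1` meets the
diagonal of content `d`. -/
def cov (n : ℕ) (F : Finset ℤ) (d : ℤ) : ℕ := (F.filter fun p => p ≤ d ∧ d < p + n).card

/-- The indicator function of a finite set of integers. -/
def indN (F : Finset ℤ) (c : ℤ) : ℕ := if c ∈ F then 1 else 0

lemma indN_le_one (F : Finset ℤ) (c : ℤ) : indN F c ≤ 1 := by
  unfold indN; split_ifs <;> omega

lemma indN_of_mem {F : Finset ℤ} {c : ℤ} (h : c ∈ F) : indN F c = 1 := if_pos h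

lemma indN_of_not_mem {F : Finset ℤ} {c : ℤ} (h : c ∉ F) : indN F c = 0 := if_neg h

lemma mem_iff_indN {F : Finset ℤ} {c : ℤ} : c ∈ F ↔ indN F c = 1 := by
  unfold indN; split_ifs with h <;> simp [h]

lemma cov_step (n : ℕ) (F : Finset ℤ) (c : ℤ) :
    cov n F c + indN F (c - n) = cov n F (c - 1) + indN F c := by
  have h : ∀ x : ℤ, indN F x = ∑ p ∈ F, if p = x then 1 else 0 := by
    intro x; simp [indN]
  simp only [cov, card_filter, h, ← sum_add_distrib]
  refine sum_congr rfl fun p _ => ?_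
  split_ifs <;> omega

lemma exists_abs_bound (F : Finset ℤ) : ∃ B : ℕ, ∀ p ∈ F, p.natAbs ≤ B :=
  ⟨F.sup Int.natAbs, fun _ hp => le_sup (f := Int.natAbs) hp⟩

lemma cov_eq_zero {n : ℕ} {F : Finset ℤ} {d : ℤ} (h : ∀ p ∈ F, p ≤ d → ¬ d < p + n) :
    cov n F d = 0 := by
  rw [cov, card_eq_zero, filter_eq_empty_iff]
  rintro p hp ⟨h1, h2⟩
  exact h p hp h1 h2

lemma cov_mono {n : ℕ} {A F : Finset ℤ} (h : A ⊆ F) (d : ℤ) : cov n A d ≤ cov n F d :=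
  card_le_card (filter_subset_filter _ h)

lemma cov_insert {n : ℕ} {A : Finset ℤ} {p : ℤ} (hp : p ∉ A) (d : ℤ) :
    cov n (insert p A) d = cov n A d + if p ≤ d ∧ d < p + n then 1 else 0 := by
  unfold cov
  rw [filter_insert]
  split_ifs with h
  · rw [card_insert_of_notMem]
    exact fun hc => hp (mem_of_mem_filter _ hc)
  · rfl

/-- The order in which the ribbons of a strip are added: from left to right in a horizontal
strip (`h = true`), from right to left in a vertical one (`h = false`). -/
def before (h : Bool) (p p' : ℤ) : Prop := if h = true then p < p' else p' < p

instance (h : Bool) (p p' : ℤ) : Decidable (before h p p') := by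
  unfold before; infer_instance

/-- The moves made before the move at `p`. -/
def prior (h : Bool) (F : Finset ℤ) (p : ℤ) : Finset ℤ := F.filter fun p' => before h p' p

/-- The row of the cell of content `d` in the ribbon with tail at `p`, when a strip with tails
`F` is added to `ν`. -/
noncomputable def rowOf (n : ℕ) (ν : YoungDiagram) (h : Bool) (F : Finset ℤ) (p d : ℤ) : ℕ :=
  bdry ν d + cov n (prior h F p) d

/-- The ribbon with tail at `p`, when a strip with tails `F` is added to `ν`. -/
noncomputable def tile (n : ℕ) (ν : YoungDiagram) (h : Bool) (F : Finset ℤ) (p : ℤ) :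
    Finset (ℕ × ℕ) :=
  (Ico p (p + n)).image (pathCell (rowOf n ν h F p))

/-- Moving the beads of `ν` at the positions in `F` by `n` steps each gives `ν'`, and the moves
are allowed in a row of the lattice model: in a horizontal row a bead never lands on a position
occupied in `ν`, in a vertical row no bead moves twice. -/
def Valid (n : ℕ) (h : Bool) (ν ν' : YoungDiagram) (F : Finset ℤ) : Prop :=
  (∀ d, bdry ν' d = bdry ν d + cov n F d) ∧
    (h = true → ∀ p ∈ F, ¬ bead ν (p + n)) ∧ (h = false → ∀ p ∈ F, bead ν p)

/-- `S` is a tiling of `ν'/ν` as a horizontal (`h = true`) or vertical (`h = false`) ribbon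
strip. -/
def StripTiling (n : ℕ) (h : Bool) (ν ν' : YoungDiagram)
    (S : Finset (Finset (ℕ × ℕ))) : Prop :=
  ν ≤ ν' ∧ IsTilingOf n (ν'.cells \ ν.cells) S ∧
    ∀ t ∈ S, (h = true → TouchesNorth (ν'.cells \ ν.cells) (topRight t)) ∧
      (h = false → TouchesWest (ν'.cells \ ν.cells) (bottomLeft t))

lemma touchesNorth_iff {ν ν' : YoungDiagram} {i : ℕ} {d : ℤ} (h0 : 0 ≤ (i : ℤ) + d)
    (h1 : i < bdry ν' d) :
    TouchesNorth (ν'.cells \ ν.cells) (i, ((i : ℤ) + d).toNat) ↔ i ≤ bdry ν (d + 1) := by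
  unfold TouchesNorth
  simp only
  rcases Nat.eq_zero_or_pos i with rfl | hi
  · simp
  · rw [mem_sdiff_iff_bdry,
      show ((((i : ℤ) + d).toNat : ℤ) - ((i - 1 : ℕ) : ℤ)) = d + 1 by omega]
    have := bdry_le_succ ν' d
    omega

lemma touchesWest_iff {ν ν' : YoungDiagram} {i : ℕ} {d : ℤ} (h0 : 0 ≤ (i : ℤ) + d)
    (h1 : i < bdry ν' d) :
    TouchesWest (ν'.cells \ ν.cells) (i, ((i : ℤ) + d).toNat) ↔ i < bdry ν (d - 1) := by
  unfold TouchesWest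
  simp only
  have h2 := bdry_nonneg ν (d - 1)
  rcases Nat.eq_zero_or_pos ((i : ℤ) + d).toNat with hj | hj
  · simp only [hj, true_or, true_iff]
    omega
  · rw [mem_sdiff_iff_bdry,
      show (((((i : ℤ) + d).toNat - 1 : ℕ) : ℤ) - (i : ℤ)) = d - 1 by omega]
    have := bdry_pred ν' d
    omega

lemma Valid.bead_eq {n : ℕ} {h : Bool} {ν ν' : YoungDiagram} {F : Finset ℤ}
    (hv : Valid n h ν ν' F) (c : ℤ) :
    beadN ν c + indN F (c - n) = beadN ν' c + indN F c := by
  have e1 := bdry_pred ν c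
  have e2 := bdry_pred ν' c
  have e3 := hv.1 c
  have e4 := hv.1 (c - 1)
  have e5 := cov_step n F c
  omega

/-- A set of moves is determined by its effect: look at the leftmost difference. -/
lemma Valid.unique {n : ℕ} (hn : 1 ≤ n) {h : Bool} {ν ν' : YoungDiagram} {F F' : Finset ℤ}
    (hv : Valid n h ν ν' F) (hv' : Valid n h ν ν' F') : F = F' := by
  by_contra hne
  have hne' : (symmDiff F F').Nonempty := by
    rw [nonempty_iff_ne_empty]
    intro h0
    exact hne (symmDiff_eq_bot.1 h0)
  set c := (symmDiff F F').min' hne' with hc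
  have hcm : c ∈ symmDiff F F' := min'_mem _ _
  have hcn : c - n ∉ symmDiff F F' := by
    intro hm
    have := min'_le _ _ hm
    omega
  have e1 := hv.bead_eq c
  have e2 := hv'.bead_eq c
  rw [mem_symmDiff] at hcm hcn
  simp only [mem_iff_indN] at hcm hcn
  have i1 := indN_le_one F c
  have i2 := indN_le_one F' c
  have i3 := indN_le_one F (c - n)
  have i4 := indN_le_one F' (c - n)
  omega

/-- Performing an initial segment `A` of the moves `F` gives a Young diagram. -/
lemma Valid.exists_partial {n : ℕ} (hn : 1 ≤ n) {h : Bool} {ν ν' : YoungDiagram}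
    {F A : Finset ℤ} (hv : Valid n h ν ν' F) (hA : A ⊆ F)
    (hdown : ∀ a ∈ F, ∀ a' ∈ A, before h a a' → a ∈ A) :
    ∃ κ : YoungDiagram, ∀ d, bdry κ d = bdry ν d + cov n A d := by
  have key : ∀ c, indN A c ≤ beadN ν c + indN A (c - n) ∧
      beadN ν c + indN A (c - n) ≤ indN A c + 1 := by
    intro c
    have e0 := hv.bead_eq c
    have e1 := beadN_le_one ν c
    have e2 := beadN_le_one ν' c
    have e3 := indN_le_one A c
    have e4 := indN_le_one A (c - n)
    by_cases h1 : c ∈ A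
    · by_cases h2 : c - n ∈ A
      · rw [indN_of_mem h1, indN_of_mem h2]
        omega
      · rw [indN_of_mem h1, indN_of_not_mem h2]
        have h1F := hA h1
        cases h
        · have := hv.2.2 rfl c h1F
          simp only [beadN, if_pos this]
          omega
        · have h2F : c - n ∉ F := fun hc => h2 (hdown _ hc _ h1 (by simp [before]; omega))
          rw [indN_of_mem h1F, indN_of_not_mem h2F] at e0
          omega
    · by_cases h2 : c - n ∈ A
      · rw [indN_of_not_mem h1, indN_of_mem h2]
        have h2F := hA h2
        cases h
        · have h1F : c ∉ F := fun hc => h1 (hdown _ hc _ h2 (by simp [before]; omega))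
          rw [indN_of_mem h2F, indN_of_not_mem h1F] at e0
          omega
        · have := hv.2.1 rfl _ h2F
          rw [sub_add_cancel] at this
          simp only [beadN, if_neg this]
          omega
      · rw [indN_of_not_mem h1, indN_of_not_mem h2]
        omega
  obtain ⟨B, hB⟩ := exists_abs_bound A
  obtain ⟨N, M, hbox⟩ := exists_inBox ν
  obtain ⟨κ, hκ⟩ := exists_bdry_eq (fun d => bdry ν d + cov n A d)
    (fun d => by have := bdry_nonneg ν d; push_cast; omega)
    (fun d => by
      have k := key (d + 1)
      have c1 := cov_step n A (d + 1)
      have c2 := bdry_pred ν (d + 1)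
      rw [add_sub_cancel_right] at c1 c2
      omega)
    (fun d => by
      have k := key (d + 1)
      have c1 := cov_step n A (d + 1)
      have c2 := bdry_pred ν (d + 1)
      rw [add_sub_cancel_right] at c1 c2
      omega)
    ⟨M + B + n, by
      rw [hbox.bdry_right (by push_cast; omega), cov_eq_zero]
      intro p hp h1
      have := hB p hp
      push_cast
      omega⟩
    ⟨N + B + 1, by
      have := hbox.bdry_left (d := -((N + B + 1 : ℕ) : ℤ)) (by push_cast; omega)
      rw [cov_eq_zero]
      · omega
      · intro p hp h1
        have := hB p hp
        push_cast at h1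
        omega⟩
  exact ⟨κ, fun d => congrFun hκ d⟩

lemma before_irrefl (h : Bool) (p : ℤ) : ¬ before h p p := by
  cases h <;> simp [before]

lemma before_trans {h : Bool} {p q r : ℤ} (h1 : before h p q) (h2 : before h q r) :
    before h p r := by
  cases h <;> simp [before] at * <;> omega

lemma before_total {h : Bool} {p q : ℤ} (hne : p ≠ q) : before h p q ∨ before h q p := by
  cases h <;> simp [before] at * <;> omega

lemma mem_tile {n : ℕ} {ν : YoungDiagram} {h : Bool} {F : Finset ℤ} {p : ℤ} (i j : ℕ) :
    (i, j) ∈ tile n ν h F p ↔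
      p ≤ (j : ℤ) - i ∧ (j : ℤ) - i < p + n ∧ i = rowOf n ν h F p ((j : ℤ) - i) := by
  unfold tile
  rw [mem_image]
  constructor
  · rintro ⟨d, hd, he⟩
    rw [mem_Ico] at hd
    simp only [pathCell, Prod.mk.injEq] at he
    have h0 := bdry_nonneg ν d
    have h1 : bdry ν d ≤ rowOf n ν h F p d := Nat.le_add_right _ _
    have : (j : ℤ) - i = d := by omega
    rw [this]
    exact ⟨hd.1, hd.2, he.1.symm⟩
  · rintro ⟨h1, h2, h3⟩
    refine ⟨(j : ℤ) - i, mem_Ico.2 ⟨h1, h2⟩, ?_⟩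
    rw [pathCell, ← h3]
    simp

lemma not_mem_prior (h : Bool) (F : Finset ℤ) (p : ℤ) : p ∉ prior h F p := fun hc =>
  before_irrefl h p (mem_filter.1 hc).2

lemma Valid.tile_path {n : ℕ} (hn : 1 ≤ n) {h : Bool} {ν ν' : YoungDiagram} {F : Finset ℤ}
    (hv : Valid n h ν ν' F) (p : ℤ) :
    RibbonPath n (tile n ν h F p) p (rowOf n ν h F p) := by
  obtain ⟨κ, hκ⟩ := hv.exists_partial hn (A := prior h F p) (filter_subset _ _)
    (fun a ha a' ha' hb => mem_filter.2 ⟨ha, before_trans hb (mem_filter.1 ha').2⟩)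
  have hrow : ∀ d, rowOf n ν h F p d = bdry κ d := fun d => (hκ d).symm
  refine ⟨mem_tile, fun d _ _ => ?_, fun d _ _ => ?_⟩
  · rw [hrow]; exact bdry_nonneg κ d
  · rw [hrow, hrow]
    have := bdry_succ_le κ d
    have := bdry_le_succ κ d
    omega

lemma Valid.tile_skew {n : ℕ} (hn : 1 ≤ n) {h : Bool} {ν ν' : YoungDiagram} {F : Finset ℤ}
    (hv : Valid n h ν ν' F) {p : ℤ} (hp : p ∈ F) : IsSkewCells (tile n ν h F p) := by
  obtain ⟨κ, hκ⟩ := hv.exists_partial hn (A := prior h F p) (filter_subset _ _)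
    (fun a ha a' ha' hb => mem_filter.2 ⟨ha, before_trans hb (mem_filter.1 ha').2⟩)
  obtain ⟨κ', hκ'⟩ := hv.exists_partial hn (A := insert p (prior h F p))
    (insert_subset hp (filter_subset _ _))
    (fun a ha a' ha' hb => by
      refine mem_insert_of_mem (mem_filter.2 ⟨ha, ?_⟩)
      rcases mem_insert.1 ha' with rfl | ha'
      · exact hb
      · exact before_trans hb (mem_filter.1 ha').2)
  have hstep : ∀ d, bdry κ' d = bdry κ d + if p ≤ d ∧ d < p + n then 1 else 0 := by
    intro d
    rw [hκ', hκ, cov_insert (not_mem_prior h F p), add_assoc]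
  refine ⟨κ, κ', le_iff_bdry.2 fun d => by rw [hstep]; omega, ?_⟩
  ext ⟨i, j⟩
  rw [mem_tile, mem_sdiff_iff_bdry, hstep, rowOf, ← hκ]
  split_ifs <;> omega

lemma tile_row_lt {n : ℕ} {h : Bool} {ν : YoungDiagram} {F : Finset ℤ} {p p' d : ℤ}
    (hp : p ∈ F) (hb : before h p p') (h1 : p ≤ d) (h2 : d < p + n) :
    rowOf n ν h F p d < rowOf n ν h F p' d := by
  have hins : insert p (prior h F p) ⊆ prior h F p' := by
    refine insert_subset (mem_filter.2 ⟨hp, hb⟩) fun a ha => ?_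
    exact mem_filter.2 ⟨(mem_filter.1 ha).1, before_trans (mem_filter.1 ha).2 hb⟩
  have e1 := cov_mono (n := n) hins d
  rw [cov_insert (not_mem_prior h F p), if_pos ⟨h1, h2⟩] at e1
  unfold rowOf
  omega

lemma disjoint_tile {n : ℕ} {h : Bool} {ν : YoungDiagram} {F : Finset ℤ} {p p' : ℤ}
    (hp : p ∈ F) (hp' : p' ∈ F) (hne : p ≠ p') :
    Disjoint (tile n ν h F p) (tile n ν h F p') := by
  rw [disjoint_left]
  rintro ⟨i, j⟩ h1 h2
  rw [mem_tile] at h1 h2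
  rcases before_total (h := h) hne with hb | hb
  · have := tile_row_lt (n := n) (ν := ν) hp hb h1.1 h1.2.1
    omega
  · have := tile_row_lt (n := n) (ν := ν) hp' hb h2.1 h2.2.1
    omega

/-- The tiles meeting a diagonal fill the gap between `ν` and `ν'` on it: their rows are
distinct, lie in the gap, and there are as many of them as there are cells in the gap. -/
lemma Valid.exists_tile {n : ℕ} {h : Bool} {ν ν' : YoungDiagram} {F : Finset ℤ}
    (hv : Valid n h ν ν' F) {i : ℕ} {d : ℤ} (h1 : bdry ν d ≤ i) (h2 : i < bdry ν' d) :
    ∃ p ∈ F, p ≤ d ∧ d < p + n ∧ i = rowOf n ν h F p d := by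
  let G := F.filter fun p => p ≤ d ∧ d < p + n
  have himg : G.image (fun p => rowOf n ν h F p d) = Ico (bdry ν d) (bdry ν' d) := by
    apply eq_of_subset_of_card_le
    · intro r hr
      obtain ⟨p, hp, rfl⟩ := mem_image.1 hr
      obtain ⟨hpF, hp1, hp2⟩ := mem_filter.1 hp
      have hsub : insert p (prior h F p) ⊆ F := insert_subset hpF (filter_subset _ _)
      have e1 := cov_mono (n := n) hsub d
      rw [cov_insert (not_mem_prior h F p), if_pos ⟨hp1, hp2⟩] at e1
      rw [mem_Ico, hv.1 d, rowOf]
      omega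
    · rw [card_image_of_injOn, Nat.card_Ico, hv.1 d]
      · simp [G, cov]
      · intro p hp p' hp' he
        obtain ⟨hpF, hp1, hp2⟩ := mem_filter.1 hp
        obtain ⟨hpF', hp1', hp2'⟩ := mem_filter.1 hp'
        by_contra hne
        simp only at he
        rcases before_total (h := h) hne with hb | hb
        · have := tile_row_lt (n := n) (ν := ν) hpF hb hp1 hp2
          omega
        · have := tile_row_lt (n := n) (ν := ν) hpF' hb hp1' hp2'
          omega
  have : i ∈ G.image (fun p => rowOf n ν h F p d) := by
    rw [himg, mem_Ico]; exact ⟨h1, h2⟩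
  obtain ⟨p, hp, he⟩ := mem_image.1 this
  obtain ⟨hpF, hp1, hp2⟩ := mem_filter.1 hp
  exact ⟨p, hpF, hp1, hp2, he.symm⟩

lemma rowOf_head {n : ℕ} {ν : YoungDiagram} {F : Finset ℤ} {p : ℤ} :
    rowOf n ν true F p (p + n - 1) = bdry ν (p + n - 1) := by
  rw [rowOf, cov_eq_zero, add_zero]
  intro p' hp' h1
  have := (mem_filter.1 hp').2
  simp only [before, if_true] at this
  omega

lemma rowOf_tail {n : ℕ} {ν : YoungDiagram} {F : Finset ℤ} {p : ℤ} :
    rowOf n ν false F p p = bdry ν p := by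
  rw [rowOf, cov_eq_zero, add_zero]
  intro p' hp' h1
  have := (mem_filter.1 hp').2
  simp [before] at this
  omega

lemma Valid.row_lt {n : ℕ} {h : Bool} {ν ν' : YoungDiagram} {F : Finset ℤ}
    (hv : Valid n h ν ν' F) {p d : ℤ} (hp : p ∈ F) (h1 : p ≤ d) (h2 : d < p + n) :
    rowOf n ν h F p d < bdry ν' d := by
  have hsub : insert p (prior h F p) ⊆ F := insert_subset hp (filter_subset _ _)
  have e1 := cov_mono (n := n) hsub d
  rw [cov_insert (not_mem_prior h F p), if_pos ⟨h1, h2⟩] at e1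
  rw [hv.1 d, rowOf]
  omega

lemma Valid.stripTiling {n : ℕ} (hn : 1 ≤ n) {h : Bool} {ν ν' : YoungDiagram} {F : Finset ℤ}
    (hv : Valid n h ν ν' F) : StripTiling n h ν ν' (F.image (tile n ν h F)) := by
  refine ⟨le_iff_bdry.2 fun d => by rw [hv.1]; omega, ⟨?_, ?_, ?_⟩, ?_⟩
  · intro t ht
    obtain ⟨p, hp, rfl⟩ := mem_image.1 ht
    exact (hv.tile_path hn p).isRibbon (hv.tile_skew hn hp)
  · intro t ht t' ht' hne
    obtain ⟨p, hp, rfl⟩ := mem_image.1 ht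
    obtain ⟨p', hp', rfl⟩ := mem_image.1 ht'
    exact disjoint_tile hp hp' fun he => hne (by rw [he])
  · ext ⟨i, j⟩
    rw [mem_sup, mem_sdiff_iff_bdry]
    constructor
    · rintro ⟨t, ht, hij⟩
      obtain ⟨p, hp, rfl⟩ := mem_image.1 ht
      obtain ⟨h1, h2, h3⟩ := (mem_tile i j).1 hij
      have e1 := hv.row_lt hp h1 h2
      rw [← h3] at e1
      rw [rowOf] at h3
      omega
    · rintro ⟨h1, h2⟩
      obtain ⟨p, hp, h3, h4, h5⟩ := hv.exists_tile h1 h2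
      exact ⟨_, mem_image_of_mem _ hp, (mem_tile i j).2 ⟨h3, h4, h5⟩⟩
  · intro t ht
    obtain ⟨p, hp, rfl⟩ := mem_image.1 ht
    have hpath := hv.tile_path hn p
    rw [hpath.topRight_eq hn, hpath.bottomLeft_eq hn]
    constructor
    · rintro rfl
      rw [pathCell, touchesNorth_iff (hpath.nonneg _ (by omega) (by omega))
        (hv.row_lt hp (by omega) (by omega)), rowOf_head, sub_add_cancel, bdry_pred]
      simp [beadN, hv.2.1 rfl p hp]
    · rintro rfl
      rw [pathCell, touchesWest_iff (hpath.nonneg _ (by omega) (by omega))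
        (hv.row_lt hp (by omega) (by omega)), rowOf_tail, bdry_pred]
      simp [beadN, hv.2.2 rfl p hp]

/-- If `f` maps `T` bijectively onto an interval, then the value of `f` at a point is its rank. -/
lemma rank_of_image_eq_Ico {α : Type*} {T : Finset α} {f : α → ℕ} {a b : ℕ}
    (hf : Set.InjOn f T) (himg : T.image f = Ico a b) {t : α} (ht : t ∈ T) :
    f t = a + (T.filter fun u => f u < f t).card := by
  have hft : f t ∈ Ico a b := by rw [← himg]; exact mem_image_of_mem f ht
  rw [mem_Ico] at hft
  have h1 : (T.filter fun u => f u < f t).image f = Ico a (f t) := by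
    ext r
    simp only [mem_image, mem_filter, mem_Ico]
    constructor
    · rintro ⟨u, ⟨hu, hlt⟩, rfl⟩
      have : f u ∈ Ico a b := by rw [← himg]; exact mem_image_of_mem f hu
      rw [mem_Ico] at this
      exact ⟨this.1, hlt⟩
    · rintro ⟨h1, h2⟩
      have : r ∈ T.image f := by rw [himg, mem_Ico]; omega
      obtain ⟨u, hu, rfl⟩ := mem_image.1 this
      exact ⟨u, ⟨hu, h2⟩, rfl⟩
  have h2 : (T.filter fun u => f u < f t).card = f t - a := by
    rw [← card_image_of_injOn (hf.mono (coe_subset.2 (filter_subset _ _))), h1, Nat.card_Ico]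
  omega

/-- Every strip tiling comes from a set of bead moves.  On a common diagonal, two ribbons of the
strip are ordered by their tails: ribbons cannot cross, and at the head of the left ribbon (in
the horizontal case), respectively at the tail of the right one (in the vertical case), the wrong
order contradicts the strip condition.  Hence the row of a cell is the boundary row of `ν` plus
the number of ribbons that come earlier on the same diagonal. -/
lemma StripTiling.exists_valid {n : ℕ} (hn : 1 ≤ n) {h : Bool} {ν ν' : YoungDiagram}
    {S : Finset (Finset (ℕ × ℕ))} (hS : StripTiling n h ν ν' S) :
    ∃ F, Valid n h ν ν' F ∧ S = F.image (tile n ν h F) := by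
  classical
  obtain ⟨hle, ⟨hrib, hdisj, hsup⟩, htouch⟩ := hS
  have hex : ∀ t, ∃ pρ : ℤ × (ℤ → ℕ), t ∈ S → RibbonPath n t pρ.1 pρ.2 := by
    intro t
    by_cases ht : t ∈ S
    · obtain ⟨p, ρ, hp⟩ := (hrib t ht).exists_path hn
      exact ⟨(p, ρ), fun _ => hp⟩
    · exact ⟨(0, fun _ => 0), fun h => absurd h ht⟩
  choose pρ hpath using hex
  let P : Finset (ℕ × ℕ) → ℤ := fun t => (pρ t).1
  let ρ : Finset (ℕ × ℕ) → ℤ → ℕ := fun t => (pρ t).2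
  replace hpath : ∀ t ∈ S, RibbonPath n t (P t) (ρ t) := hpath
  have hcell : ∀ t ∈ S, ∀ d, P t ≤ d → d < P t + n → bdry ν d ≤ ρ t d ∧ ρ t d < bdry ν' d := by
    intro t ht d h1 h2
    have hm := (hpath t ht).cell_mem h1 h2
    have h0 := (hpath t ht).nonneg d h1 h2
    have hm' : pathCell (ρ t) d ∈ ν'.cells \ ν.cells := by
      rw [← hsup, mem_sup]; exact ⟨t, ht, hm⟩
    rw [pathCell, mem_sdiff_iff_bdry,
      show ((((ρ t d : ℤ) + d).toNat : ℤ) - (ρ t d : ℤ)) = d by omega] at hm'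
    exact hm'
  have hcover : ∀ d i, bdry ν d ≤ i → i < bdry ν' d →
      ∃ t ∈ S, P t ≤ d ∧ d < P t + n ∧ ρ t d = i := by
    intro d i h1 h2
    have h0 := bdry_nonneg ν d
    have hm : (i, ((i : ℤ) + d).toNat) ∈ ν'.cells \ ν.cells := by
      rw [mem_sdiff_iff_bdry, show ((((i : ℤ) + d).toNat : ℤ) - (i : ℤ)) = d by omega]
      exact ⟨h1, h2⟩
    rw [← hsup, mem_sup] at hm
    obtain ⟨t, ht, hm⟩ := hm
    have := ((hpath t ht).mem _ _).1 hm
    rw [show ((((i : ℤ) + d).toNat : ℤ) - (i : ℤ)) = d by omega] at this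
    exact ⟨t, ht, this.1, this.2.1, this.2.2.symm⟩
  have hne : ∀ t ∈ S, ∀ u ∈ S, t ≠ u → ∀ d, P t ≤ d → d < P t + n → P u ≤ d → d < P u + n →
      ρ t d ≠ ρ u d := by
    intro t ht u hu htu d h1 h2 h3 h4 he
    have m1 := (hpath t ht).cell_mem h1 h2
    have m2 := (hpath u hu).cell_mem h3 h4
    rw [pathCell, he] at m1
    exact disjoint_left.1 (hdisj t ht u hu htu) m1 m2
  -- disjoint ribbon paths move by at most one row per diagonal, so they cannot cross
  have hfwd : ∀ t ∈ S, ∀ u ∈ S, t ≠ u → ∀ d d', d ≤ d' → P t ≤ d → P u ≤ d →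
      d' < P t + n → d' < P u + n → ρ u d < ρ t d → ρ u d' < ρ t d' := by
    intro t ht u hu htu d d' hdd
    induction d', hdd using Int.leInduction with
    | base => intros; assumption
    | succ k hk ih =>
      intro h1 h2 h3 h4 h5
      have h6 := ih h1 h2 (by omega) (by omega) h5
      have h7 := hne t ht u hu htu (k + 1) (by omega) h3 (by omega) h4
      have h8 := (hpath t ht).step k (by omega) h3
      have h9 := (hpath u hu).step k (by omega) h4
      omega
  have hbwd : ∀ t ∈ S, ∀ u ∈ S, t ≠ u → ∀ d d', d ≤ d' → P t ≤ d → P u ≤ d →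
      d' < P t + n → d' < P u + n → ρ u d' < ρ t d' → ρ u d < ρ t d := by
    intro t ht u hu htu d d' hdd h1 h2 h3 h4 h5
    by_contra hc
    have h6 := hne t ht u hu htu d h1 (by omega) h2 (by omega)
    have := hfwd u hu t ht htu.symm d d' hdd h2 h1 h4 h3 (by omega)
    omega
  have hN : h = true → ∀ t ∈ S, ρ t (P t + n - 1) ≤ bdry ν (P t + n) := by
    intro hh t ht
    have h1 := (htouch t ht).1 hh
    have hp := hpath t ht
    rw [hp.topRight_eq hn, pathCell, touchesNorth_iff (hp.nonneg _ (by omega) (by omega))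
      (hcell t ht _ (by omega) (by omega)).2, sub_add_cancel] at h1
    exact h1
  have hW : h = false → ∀ t ∈ S, ρ t (P t) < bdry ν (P t - 1) := by
    intro hh t ht
    have h1 := (htouch t ht).2 hh
    have hp := hpath t ht
    rwa [hp.bottomLeft_eq hn, pathCell, touchesWest_iff (hp.nonneg _ (by omega) (by omega))
      (hcell t ht _ (by omega) (by omega)).2] at h1
  -- on a common diagonal, the ribbon that comes first in the order `before` is the upper one
  have hord : ∀ t ∈ S, ∀ u ∈ S, t ≠ u → ¬ before h (P u) (P t) → ∀ d,
      P t ≤ d → d < P t + n → P u ≤ d → d < P u + n → ρ t d < ρ u d := by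
    intro t ht u hu htu hb d h1 h2 h3 h4
    by_contra hc
    have h5 := hne t ht u hu htu d h1 h2 h3 h4
    cases h
    · simp only [before, Bool.false_eq_true, if_false, not_lt] at hb
      have h6 := hbwd t ht u hu htu (P t) d h1 le_rfl hb h2 h4 (by omega)
      have h7 := hW rfl t ht
      have h8 := (hcell u hu (P t) hb (by omega)).1
      have h9 := bdry_pred ν (P t)
      have h10 := beadN_le_one ν (P t)
      omega
    · simp only [before, if_true, not_lt] at hb
      have h6 := hfwd t ht u hu htu d (P t + n - 1) (by omega) h1 h3 (by omega) (by omega)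
        (by omega)
      have h7 := hN rfl t ht
      have h8 := (hcell u hu (P t + n - 1) (by omega) (by omega)).1
      have h9 := bdry_anti ν (show P t + n - 1 ≤ P t + n by omega)
      omega
  have hinj : Set.InjOn P S := by
    intro t ht u hu he
    by_contra htu
    have b1 : ¬ before h (P u) (P t) := by rw [he]; exact before_irrefl _ _
    have b2 : ¬ before h (P t) (P u) := by rw [he]; exact before_irrefl _ _
    have h1 := hord t ht u hu htu b1 (P t) le_rfl (by omega) (by omega) (by omega)
    have h2 := hord u hu t ht (Ne.symm htu) b2 (P t) (by omega) (by omega) le_rfl (by omega)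
    omega
  -- on each diagonal the ribbons fill the interval of rows between the two boundaries
  have himg : ∀ d, (S.filter fun t => P t ≤ d ∧ d < P t + n).image (fun t => ρ t d) =
      Ico (bdry ν d) (bdry ν' d) := by
    intro d
    ext i
    simp only [mem_image, mem_filter, mem_Ico]
    constructor
    · rintro ⟨t, ⟨ht, h1, h2⟩, rfl⟩
      exact hcell t ht d h1 h2
    · rintro ⟨h1, h2⟩
      obtain ⟨t, ht, h3, h4, h5⟩ := hcover d i h1 h2
      exact ⟨t, ⟨ht, h3, h4⟩, h5⟩
  have hρinj : ∀ d, Set.InjOn (fun t => ρ t d)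
      (S.filter fun t => P t ≤ d ∧ d < P t + n : Finset (Finset (ℕ × ℕ))) := by
    intro d t ht u hu he
    rw [mem_coe, mem_filter] at ht hu
    by_contra htu
    exact hne t ht.1 u hu.1 htu d ht.2.1 ht.2.2 hu.2.1 hu.2.2 he
  have hcov : ∀ (Q : ℤ → Prop) [DecidablePred Q] (d : ℤ),
      cov n ((S.image P).filter Q) d =
        (S.filter fun t => Q (P t) ∧ P t ≤ d ∧ d < P t + n).card := by
    intro Q _ d
    rw [cov, filter_filter, filter_image, card_image_of_injOn]
    exact hinj.mono (coe_subset.2 (filter_subset _ _))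
  have hrow : ∀ t ∈ S, ∀ d, P t ≤ d → d < P t + n →
      ρ t d = rowOf n ν h (S.image P) (P t) d := by
    intro t ht d h1 h2
    have hr := rank_of_image_eq_Ico (hρinj d) (himg d) (t := t) (mem_filter.2 ⟨ht, h1, h2⟩)
    rw [rowOf, prior, hcov]
    rw [filter_filter] at hr
    rw [hr]
    congr 2
    refine filter_congr fun u hu => ?_
    constructor
    · rintro ⟨⟨h3, h4⟩, h5⟩
      refine ⟨?_, h3, h4⟩
      by_contra hb
      have htu : t ≠ u := by rintro rfl; omega
      have := hord t ht u hu htu hb d h1 h2 h3 h4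
      omega
    · rintro ⟨hb, h3, h4⟩
      refine ⟨⟨h3, h4⟩, ?_⟩
      have htu : u ≠ t := by rintro rfl; exact before_irrefl _ _ hb
      refine hord u hu t ht htu (fun hb' => ?_) d h3 h4 h1 h2
      exact before_irrefl _ _ (before_trans hb hb')
  refine ⟨S.image P, ⟨?_, ?_, ?_⟩, ?_⟩
  · intro d
    have h1 := hcov (fun _ => True) d
    rw [filter_true] at h1
    have h2 := card_image_of_injOn (hρinj d)
    rw [himg, Nat.card_Ico] at h2
    have h3 := le_iff_bdry.1 hle d
    simp only [true_and] at h1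
    omega
  · intro hh p hp hb
    obtain ⟨t, ht, rfl⟩ := mem_image.1 hp
    have h1 := hN hh t ht
    have h2 := (hcell t ht (P t + n - 1) (by omega) (by omega)).1
    unfold bead at hb
    omega
  · intro hh p hp
    obtain ⟨t, ht, rfl⟩ := mem_image.1 hp
    have h1 := hW hh t ht
    have h2 := (hcell t ht (P t) (by omega) (by omega)).1
    have h3 := bdry_pred ν (P t)
    have h4 := beadN_le_one ν (P t)
    unfold bead
    omega
  · rw [image_image]
    have : S.image (tile n ν h (S.image P) ∘ P) = S.image id := by
      refine image_congr fun t ht => ?_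
      refine Eq.trans ?_ (hpath t ht).eq_image.symm
      unfold tile
      refine image_congr fun d hd => ?_
      rw [mem_coe, mem_Ico] at hd
      simp only [pathCell]
      rw [hrow t ht d hd.1 hd.2]
    rw [this, image_id]

/-! ### The spin of a strip -/

/-- The contribution of the position `c` to the spin of each move across it: one if there is a
bead at `c` when the move is made, zero otherwise. -/
noncomputable def stepN (n : ℕ) (h : Bool) (ν : YoungDiagram) (F : Finset ℤ) (c : ℤ) : ℕ :=
  if h = true then beadN ν c + indN F (c - n) else beadN ν c - indN F c

/-- The number of moves across the position `c`. -/
def acrossN (n : ℕ) (F : Finset ℤ) (c : ℤ) : ℕ := (F.filter fun p => p < c ∧ c < p + n).card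

lemma indN_filter_of {F : Finset ℤ} {Q : ℤ → Prop} [DecidablePred Q] {c : ℤ} (h : Q c) :
    indN (F.filter Q) c = indN F c := by
  simp [indN, h]

lemma indN_filter_of_not {F : Finset ℤ} {Q : ℤ → Prop} [DecidablePred Q] {c : ℤ} (h : ¬ Q c) :
    indN (F.filter Q) c = 0 := by
  simp [indN, h]

lemma Valid.row_pred {n : ℕ} {h : Bool} {ν ν' : YoungDiagram} {F : Finset ℤ}
    (hv : Valid n h ν ν' F) {p c : ℤ} (h1 : p < c) (h2 : c < p + n) :
    rowOf n ν h F p (c - 1) = rowOf n ν h F p c + stepN n h ν F c := by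
  have e1 := bdry_pred ν c
  have e2 := cov_step n (prior h F p) c
  unfold rowOf stepN
  cases h
  · have i1 : indN (prior false F p) (c - n) = 0 :=
      indN_filter_of_not (by simp [before]; omega)
    have i2 : indN (prior false F p) c = indN F c :=
      indN_filter_of (by simp [before]; omega)
    have i3 : indN F c ≤ beadN ν c := by
      by_cases hc : c ∈ F
      · rw [indN_of_mem hc, beadN, if_pos (hv.2.2 rfl c hc)]
      · rw [indN_of_not_mem hc]; omega
    simp only [Bool.false_eq_true, if_false]
    omega
  · have i1 : indN (prior true F p) (c - n) = indN F (c - n) :=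
      indN_filter_of (by simp [before]; omega)
    have i2 : indN (prior true F p) c = 0 :=
      indN_filter_of_not (by simp [before]; omega)
    simp only [if_true]
    omega

lemma Valid.spin_tile {n : ℕ} (hn : 1 ≤ n) {h : Bool} {ν ν' : YoungDiagram} {F : Finset ℤ}
    (hv : Valid n h ν ν' F) (p : ℤ) :
    spin (tile n ν h F p) = ∑ c ∈ Ioo p (p + n), stepN n h ν F c := by
  rw [(hv.tile_path hn p).spin_eq hn]
  have key : ∀ d, p ≤ d → d < p + n →
      rowOf n ν h F p p = rowOf n ν h F p d + ∑ c ∈ Ioc p d, stepN n h ν F c := by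
    intro d hd
    induction d, hd using Int.leInduction with
    | base => intro _; simp
    | succ k hk ih =>
      intro hk2
      have hI : Ioc p (k + 1) = insert (k + 1) (Ioc p k) := by
        ext x; simp only [mem_Ioc, mem_insert]; omega
      have h3 := hv.row_pred (p := p) (c := k + 1) (by omega) hk2
      rw [add_sub_cancel_right] at h3
      rw [hI, sum_insert (by simp), ih (by omega), h3]
      omega
  have hI : Ioo p (p + n) = Ioc p (p + n - 1) := by
    ext x; simp only [mem_Ioc, mem_Ioo]; omega
  rw [hI, key (p + n - 1) (by omega) (by omega)]
  omega

lemma Valid.sum_spin {n : ℕ} (hn : 1 ≤ n) {h : Bool} {ν ν' : YoungDiagram} {F : Finset ℤ}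
    (hv : Valid n h ν ν' F) {W : Finset ℤ} (hW : ∀ p ∈ F, Ioo p (p + n) ⊆ W) :
    ∑ p ∈ F, spin (tile n ν h F p) = ∑ c ∈ W, stepN n h ν F c * acrossN n F c := by
  have h1 : ∀ p ∈ F, spin (tile n ν h F p) =
      ∑ c ∈ W, if p < c ∧ c < p + n then stepN n h ν F c else 0 := by
    intro p hp
    rw [hv.spin_tile hn, ← sum_filter]
    refine sum_congr ?_ fun _ _ => rfl
    ext c
    rw [mem_filter, mem_Ioo]
    exact ⟨fun hc => ⟨hW p hp (mem_Ioo.2 hc), hc⟩, fun hc => hc.2⟩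
  rw [sum_congr rfl h1, sum_comm]
  refine sum_congr rfl fun c _ => ?_
  rw [← sum_filter, sum_const, smul_eq_mul, mul_comm, acrossN]

lemma Valid.tile_injOn {n : ℕ} (hn : 1 ≤ n) {h : Bool} {ν ν' : YoungDiagram} {F : Finset ℤ}
    (hv : Valid n h ν ν' F) : Set.InjOn (tile n ν h F) F := by
  intro p hp p' hp' he
  by_contra hne
  have h1 := disjoint_tile (n := n) (ν := ν) (h := h) hp hp' hne
  rw [← he, disjoint_self] at h1
  exact ((hv.tile_path hn p).nonempty hn).ne_empty h1

open scoped Classical in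
/-- The set of all horizontal (`h = true`) or vertical (`h = false`) strip tilings of `ν'/ν`. -/
noncomputable def stripTilings (n : ℕ) (h : Bool) (ν ν' : YoungDiagram) :
    Finset (Finset (Finset (ℕ × ℕ))) :=
  (ν'.cells \ ν.cells).powerset.powerset.filter (StripTiling n h ν ν')

lemma mem_stripTilings {n : ℕ} {h : Bool} {ν ν' : YoungDiagram}
    {S : Finset (Finset (ℕ × ℕ))} : S ∈ stripTilings n h ν ν' ↔ StripTiling n h ν ν' S := by
  classical
  rw [stripTilings, mem_filter, and_iff_right_iff_imp]
  intro hS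
  rw [mem_powerset]
  intro t ht
  rw [mem_powerset, ← hS.2.1.2.2]
  exact le_sup (f := id) ht

/-- The generating function of the strip tilings of `ν'/ν` by spin and number of ribbons. -/
noncomputable def rowT {R : Type*} [CommRing R] (n : ℕ) (h : Bool) (q w : R)
    (ν ν' : YoungDiagram) : R :=
  ∑ S ∈ stripTilings n h ν ν', q ^ (∑ t ∈ S, spin t) * w ^ S.card

lemma rowT_of_valid {R : Type*} [CommRing R] {n : ℕ} (hn : 1 ≤ n) {h : Bool} {q w : R}
    {ν ν' : YoungDiagram} {F W : Finset ℤ} (hv : Valid n h ν ν' F)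
    (hW : ∀ p ∈ F, Ioo p (p + n) ⊆ W) :
    rowT n h q w ν ν' =
      q ^ (∑ c ∈ W, stepN n h ν F c * acrossN n F c) * w ^ F.card := by
  have h1 : stripTilings n h ν ν' = {F.image (tile n ν h F)} := by
    ext S
    rw [mem_singleton, mem_stripTilings]
    constructor
    · intro hS
      obtain ⟨F', hv', rfl⟩ := hS.exists_valid hn
      rw [hv.unique hn hv']
    · rintro rfl
      exact hv.stripTiling hn
  rw [rowT, h1, sum_singleton, sum_image (hv.tile_injOn hn), card_image_of_injOn (hv.tile_injOn hn),
    hv.sum_spin hn hW]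

lemma rowT_of_not_valid {R : Type*} [CommRing R] {n : ℕ} (hn : 1 ≤ n) {h : Bool} {q w : R}
    {ν ν' : YoungDiagram} (hv : ¬ ∃ F, Valid n h ν ν' F) : rowT n h q w ν ν' = 0 := by
  rw [rowT, sum_eq_zero]
  intro S hS
  obtain ⟨F, hF, -⟩ := (mem_stripTilings.1 hS).exists_valid hn
  exact absurd ⟨F, hF⟩ hv

/-! ### One row of the lattice model -/

/-- The weight table of a horizontal-strip row (`h = true`) or vertical-strip row (`h = false`),
where `w` is the signed weight of a ribbon, that is `x` or `-y`. -/
def rowTab {R : Type*} [CommRing R] (h : Bool) (q w : R) : VertexType → ℕ → R :=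
  if h = true then horizTable q w else vertTable q (-w)

/-- The vertices with a generically nonzero weight: the tuple is shifted, the arrows are
balanced, and the one type excluded by the kind of row does not occur. -/
def VertexOK (n : ℕ) (hn : 0 < n) (h : Bool) (vN vS : Bool) (vW vE : Fin n → Bool) : Prop :=
  (∀ k : Fin n, ∀ hk : k.val + 1 < n, vE k = vW ⟨k.val + 1, hk⟩) ∧
    vN.toNat + (vW ⟨0, hn⟩).toNat = vS.toNat + (vE ⟨n - 1, by omega⟩).toNat ∧
    (h = true → vW ⟨0, hn⟩ = true → vN = false) ∧
    (h = false → vE ⟨n - 1, by omega⟩ = true → vN = true)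

lemma vertexOK_of_weight_ne {R : Type*} [CommRing R] {n : ℕ} (hn : 0 < n) {h : Bool} {q w : R}
    {vN vS : Bool} {vW vE : Fin n → Bool}
    (hw : vertexWeight n (rowTab h q w) vN vS vW vE ≠ 0) : VertexOK n hn h vN vS vW vE := by
  unfold vertexWeight at hw
  rw [dif_pos hn] at hw
  split_ifs at hw with hs
  · refine ⟨hs, ?_⟩
    generalize vW ⟨0, hn⟩ = a at *
    generalize vE ⟨n - 1, _⟩ = b at *
    cases vN <;> cases vS <;> cases a <;> cases b <;> cases h <;>
      simp [classify, rowTab, horizTable, vertTable] at hw ⊢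
  · exact absurd rfl hw

lemma VertexOK.weight {R : Type*} [CommRing R] {n : ℕ} {hn : 0 < n} {h : Bool} {q w : R}
    {vN vS : Bool} {vW vE : Fin n → Bool} (hv : VertexOK n hn h vN vS vW vE) :
    vertexWeight n (rowTab h q w) vN vS vW vE =
      q ^ ((if h = true then vN.toNat + (vW ⟨0, hn⟩).toNat
          else vN.toNat - (vE ⟨n - 1, by omega⟩).toNat) *
        (univ.filter fun k : Fin n => k.val < n - 1 ∧ vE k = true).card) *
        w ^ (vE ⟨n - 1, by omega⟩).toNat := by
  obtain ⟨hs, hv⟩ := hv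
  unfold vertexWeight
  rw [dif_pos hn, if_pos hs]
  generalize vW ⟨0, hn⟩ = a at *
  generalize (univ.filter fun k : Fin n => k.val < n - 1 ∧ vE k = true).card = m
  generalize vE ⟨n - 1, _⟩ = b at *
  cases vN <;> cases vS <;> cases a <;> cases b <;> cases h <;>
    simp [classify, rowTab, horizTable, vertTable] at hv ⊢

/-- The weight of a row with vertical labels `V` above and `V'` below. -/
def rowWeight {R : Type*} [CommRing R] (n C : ℕ) (tab : VertexType → ℕ → R)
    (V V' : Fin C → Bool) (hE : Fin (C + 1) → Fin n → Bool) : R :=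
  ∏ c : Fin C, vertexWeight n tab (V c) (V' c) (hE c.castSucc) (hE c.succ)

/-- The partition function of one row with all outer horizontal labels equal to `>`. -/
def rowZ {R : Type*} [CommRing R] (n C : ℕ) (tab : VertexType → ℕ → R)
    (V V' : Fin C → Bool) : R :=
  ∑ hE ∈ univ.filter (fun hE : Fin (C + 1) → Fin n → Bool =>
    hE 0 = (fun _ => false) ∧ hE (Fin.last C) = fun _ => false), rowWeight n C tab V V' hE

/-- The horizontal labels of a row describing the moves of the beads in `F`: a bead leaving
the position `p` occupies, on the horizontal edges, the slots with content `p`. -/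
def moveLabels (n C N : ℕ) (F : Finset ℤ) : Fin (C + 1) → Fin n → Bool := fun e k =>
  decide ((e.val : ℤ) + k.val - n + 1 - N ∈ F)

lemma toNat_bead (ν : YoungDiagram) (c : ℤ) : (decide (bead ν c)).toNat = beadN ν c := by
  unfold beadN; split_ifs with h <;> simp [h]

lemma toNat_mem (F : Finset ℤ) (c : ℤ) : (decide (c ∈ F)).toNat = indN F c := by
  unfold indN; split_ifs with h <;> simp [h]

lemma one_le_cov {n : ℕ} {F : Finset ℤ} {p d : ℤ} (hp : p ∈ F) (h1 : p ≤ d) (h2 : d < p + n) :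
    1 ≤ cov n F d := by
  unfold cov
  exact card_pos.2 ⟨p, mem_filter.2 ⟨hp, h1, h2⟩⟩

lemma Valid.window {n : ℕ} (hn : 0 < n) {h : Bool} {ν ν' : YoungDiagram} {F : Finset ℤ}
    {N M : ℕ} (hv : Valid n h ν ν' F) (hb : InBox N M ν) (hb' : InBox N M ν') {p : ℤ}
    (hp : p ∈ F) : 1 - (N : ℤ) ≤ p ∧ p + n ≤ M := by
  constructor
  · by_contra hc
    have h1 := one_le_cov (n := n) hp le_rfl (by omega)
    have h2 := hv.1 p
    have h3 := hb.bdry_left (d := p) (by omega)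
    have h4 := hb'.bdry_left (d := p) (by omega)
    omega
  · by_contra hc
    have h1 := one_le_cov (n := n) (d := p + n - 1) hp (by omega) (by omega)
    have h2 := hv.1 (p + n - 1)
    have h3 := hb.bdry_right (d := p + n - 1) (by omega)
    have h4 := hb'.bdry_right (d := p + n - 1) (by omega)
    omega

section
variable {n N M C : ℕ}

lemma moveLabels_castSucc_zero (hn : 0 < n) (F : Finset ℤ) (c : Fin C) :
    moveLabels n C N F c.castSucc ⟨0, hn⟩ = decide ((c.val : ℤ) + 1 - N - n ∈ F) := by
  unfold moveLabels
  rw [show ((c.castSucc.val : ℕ) : ℤ) + ((⟨0, hn⟩ : Fin n).val : ℤ) - n + 1 - N =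
    (c.val : ℤ) + 1 - N - n by simp; ring]

lemma moveLabels_succ_last (hn : 0 < n) (F : Finset ℤ) (c : Fin C) :
    moveLabels n C N F c.succ ⟨n - 1, by omega⟩ = decide ((c.val : ℤ) + 1 - N ∈ F) := by
  unfold moveLabels
  rw [show ((c.succ.val : ℕ) : ℤ) + ((⟨n - 1, by omega⟩ : Fin n).val : ℤ) - n + 1 - N =
    (c.val : ℤ) + 1 - N by simp; omega]

lemma moveLabels_shift (F : Finset ℤ) (c : Fin C) (k : Fin n) (hk : k.val + 1 < n) :
    moveLabels n C N F c.succ k = moveLabels n C N F c.castSucc ⟨k.val + 1, hk⟩ := by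
  unfold moveLabels
  rw [show ((c.succ.val : ℕ) : ℤ) + (k.val : ℤ) - n + 1 - N =
    ((c.castSucc.val : ℕ) : ℤ) + ((⟨k.val + 1, hk⟩ : Fin n).val : ℤ) - n + 1 - N by
      simp; ring]

lemma card_moveLabels (hn : 0 < n) (F : Finset ℤ) (c : Fin C) :
    (univ.filter fun k : Fin n => k.val < n - 1 ∧ moveLabels n C N F c.succ k = true).card =
      acrossN n F ((c.val : ℤ) + 1 - N) := by
  unfold acrossN
  refine card_bij (fun k _ => ((c.succ.val : ℕ) : ℤ) + k.val - n + 1 - N) ?_ ?_ ?_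
  · intro k hk
    simp only [mem_filter, moveLabels, decide_eq_true_eq, mem_univ, true_and] at hk
    refine mem_filter.2 ⟨hk.2, ?_⟩
    have := hk.1
    simp only [Fin.val_succ]
    push_cast
    omega
  · intro k _ k' _ h
    ext
    omega
  · intro p hp
    obtain ⟨hp, h1, h2⟩ := mem_filter.1 hp
    refine ⟨⟨(p + n + N - 2 - c.val).toNat, by omega⟩, ?_, ?_⟩
    · simp only [mem_filter, moveLabels, decide_eq_true_eq, mem_univ, true_and]
      refine ⟨by omega, ?_⟩
      convert hp using 1
      simp only [Fin.val_succ]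
      push_cast
      omega
    · simp only [Fin.val_succ]
      push_cast
      omega

lemma Valid.vertexOK (hn : 0 < n) {h : Bool} {ν ν' : YoungDiagram} {F : Finset ℤ}
    (hv : Valid n h ν ν' F) (hb : InBox N M ν) (hb' : InBox N M ν') (c : Fin C) :
    VertexOK n hn h (diagBoundary ν N C c) (diagBoundary ν' N C c)
      (moveLabels n C N F c.castSucc) (moveLabels n C N F c.succ) := by
  rw [diagBoundary_eq hb, diagBoundary_eq hb']
  refine ⟨moveLabels_shift F c, ?_, ?_, ?_⟩
  · rw [moveLabels_castSucc_zero, moveLabels_succ_last hn, toNat_bead, toNat_bead, toNat_mem,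
      toNat_mem, hv.bead_eq]
  · rw [moveLabels_castSucc_zero]
    intro hh hm
    have := hv.2.1 hh _ (of_decide_eq_true hm)
    rw [sub_add_cancel] at this
    simpa using this
  · rw [moveLabels_succ_last hn]
    intro hh hm
    simpa using hv.2.2 hh _ (of_decide_eq_true hm)

lemma Valid.rowWeight {R : Type*} [CommRing R] (hn : 0 < n) {h : Bool} {q w : R}
    {ν ν' : YoungDiagram} {F : Finset ℤ} (hC : C = M + N)
    (hv : Valid n h ν ν' F) (hb : InBox N M ν) (hb' : InBox N M ν') :
    rowWeight n C (rowTab h q w) (diagBoundary ν N C) (diagBoundary ν' N C)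
      (moveLabels n C N F) = rowT n h q w ν ν' := by
  have hinj : Function.Injective fun c : Fin C => (c.val : ℤ) + 1 - N := by
    intro c c' hcc
    ext
    simp only at hcc
    omega
  have hmem : ∀ x : ℤ, 1 - (N : ℤ) ≤ x → x ≤ M → ∃ c : Fin C, (c.val : ℤ) + 1 - N = x := by
    intro x h1 h2
    exact ⟨⟨(x + N - 1).toNat, by omega⟩, by simp only; omega⟩
  rw [rowT_of_valid (W := univ.image fun c : Fin C => (c.val : ℤ) + 1 - N) hn hv ?_]
  · unfold SuperLLT.rowWeight
    rw [sum_image hinj.injOn, ← prod_pow_eq_pow_sum]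
    have hcard : F.card = ∑ c : Fin C, indN F ((c.val : ℤ) + 1 - N) := by
      rw [← sum_image (f := indN F) hinj.injOn]
      unfold indN
      rw [← sum_filter, sum_const, smul_eq_mul, mul_one]
      congr 1
      ext x
      simp only [mem_filter, mem_image, mem_univ, true_and]
      refine ⟨fun hx => ⟨?_, hx⟩, fun hx => hx.2⟩
      have := hv.window hn hb hb' hx
      exact hmem x this.1 (by omega)
    rw [hcard, ← prod_pow_eq_pow_sum, ← prod_mul_distrib]
    refine prod_congr rfl fun c _ => ?_
    rw [(hv.vertexOK hn hb hb' c).weight, card_moveLabels hn, moveLabels_succ_last hn,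
      moveLabels_castSucc_zero, diagBoundary_eq hb, toNat_bead, toNat_mem, toNat_mem, stepN]
  · intro p hp x hx
    have := hv.window hn hb hb' hp
    rw [mem_Ioo] at hx
    obtain ⟨c, hc⟩ := hmem x (by omega) (by omega)
    exact mem_image.2 ⟨c, mem_univ _, hc⟩

lemma Valid.moveLabels_zero (hn : 0 < n) {h : Bool} {ν ν' : YoungDiagram} {F : Finset ℤ}
    (hv : Valid n h ν ν' F) (hb : InBox N M ν) (hb' : InBox N M ν') :
    moveLabels n C N F 0 = fun _ => false := by
  funext k
  simp only [moveLabels, decide_eq_false_iff_not]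
  intro hp
  have := hv.window hn hb hb' hp
  simp only [Fin.val_zero] at this
  omega

lemma Valid.moveLabels_last (hn : 0 < n) {h : Bool} {ν ν' : YoungDiagram} {F : Finset ℤ}
    (hC : C = M + N) (hv : Valid n h ν ν' F) (hb : InBox N M ν) (hb' : InBox N M ν') :
    moveLabels n C N F (Fin.last C) = fun _ => false := by
  funext k
  simp only [moveLabels, decide_eq_false_iff_not]
  intro hp
  have := hv.window hn hb hb' hp
  simp only [Fin.val_last] at this
  omega

/-- Every row state of nonzero weight under the diagram `ν` comes from a valid set of moves. -/
lemma exists_valid_of_row (hn : 0 < n) {h : Bool} {ν : YoungDiagram} (hC : C = M + N)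
    (hb : InBox N M ν) {V' : Fin C → Bool} {hE : Fin (C + 1) → Fin n → Bool}
    (h0 : hE 0 = fun _ => false) (h1 : hE (Fin.last C) = fun _ => false)
    (hok : ∀ c : Fin C, VertexOK n hn h (diagBoundary ν N C c) (V' c) (hE c.castSucc)
      (hE c.succ)) :
    ∃ (F : Finset ℤ) (ν' : YoungDiagram), Valid n h ν ν' F ∧ InBox N M ν' ∧
      V' = diagBoundary ν' N C ∧ hE = moveLabels n C N F := by
  let F : Finset ℤ := (univ.filter fun c : Fin C => hE c.succ ⟨n - 1, by omega⟩ = true).image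
    fun c => (c.val : ℤ) + 1 - N
  have hFmem : ∀ c : Fin C,
      (c.val : ℤ) + 1 - N ∈ F ↔ hE c.succ ⟨n - 1, by omega⟩ = true := by
    intro c
    simp only [F, mem_image, mem_filter, mem_univ, true_and]
    constructor
    · rintro ⟨c', h2, h3⟩
      have : c' = c := by ext; omega
      rwa [← this]
    · intro h2
      exact ⟨c, h2, rfl⟩
  have hFrange : ∀ p ∈ F, 1 - (N : ℤ) ≤ p ∧ p ≤ M := by
    intro p hp
    obtain ⟨c, -, rfl⟩ := mem_image.1 hp
    have := c.2
    constructor <;> omega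
  -- the left boundary labels and admissibility determine all horizontal labels
  have hlab : hE = moveLabels n C N F := by
    funext e
    induction e using Fin.induction with
    | zero =>
      rw [h0]
      funext k
      simp only [moveLabels]
      symm
      rw [decide_eq_false_iff_not]
      intro hp
      have := hFrange _ hp
      simp only [Fin.val_zero] at this
      omega
    | succ c ih =>
      funext k
      by_cases hk : k.val + 1 < n
      · rw [(hok c).1 k hk, ih, moveLabels_shift F c k hk]
      · have hk' : k = ⟨n - 1, by omega⟩ := by ext; simp only; omega
        rw [hk', moveLabels_succ_last hn, Bool.eq_iff_iff, decide_eq_true_iff, hFmem]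
  -- all labels on the right boundary are `>`, so every move ends inside the grid
  have hFr : ∀ p ∈ F, p + n ≤ M := by
    intro p hp
    by_contra hc
    have h2 := hFrange p hp
    have h3 := congrFun h1 ⟨(p - M + n - 1).toNat, by omega⟩
    rw [hlab] at h3
    simp only [moveLabels, decide_eq_false_iff_not, Fin.val_last] at h3
    refine h3 ?_
    convert hp using 1
    omega
  have hcov : ∀ d : ℤ, d ≤ -N ∨ M ≤ d → cov n F d = 0 := by
    intro d hd
    unfold cov
    rw [card_eq_zero, filter_eq_empty_iff]
    intro p hp hpd
    have := hFrange p hp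
    have := hFr p hp
    omega
  have hbal : ∀ c : Fin C, beadN ν ((c.val : ℤ) + 1 - N) + indN F ((c.val : ℤ) + 1 - N - n) =
      (V' c).toNat + indN F ((c.val : ℤ) + 1 - N) := by
    intro c
    have := (hok c).2.1
    rwa [hlab, moveLabels_castSucc_zero, moveLabels_succ_last hn, diagBoundary_eq hb, toNat_bead,
      toNat_mem, toNat_mem] at this
  have hstep : ∀ c : ℤ, indN F c ≤ beadN ν c + indN F (c - n) ∧
      beadN ν c + indN F (c - n) ≤ indN F c + 1 := by
    intro c
    by_cases hc : 1 - (N : ℤ) ≤ c ∧ c ≤ M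
    · have h2 := hbal ⟨(c + N - 1).toNat, by omega⟩
      have h3 : (((c + N - 1).toNat : ℕ) : ℤ) + 1 - N = c := by omega
      simp only [h3] at h2
      have h4 := Bool.toNat_le (V' ⟨(c + N - 1).toNat, by omega⟩)
      omega
    · have h2 : indN F c = 0 := indN_of_not_mem fun hp => hc (hFrange _ hp)
      have h3 : indN F (c - n) = 0 := indN_of_not_mem fun hp => by
        have := hFrange _ hp
        have := hFr _ hp
        omega
      have := beadN_le_one ν c
      omega
  obtain ⟨ν', hν'⟩ := exists_bdry_eq (fun d => bdry ν d + cov n F d)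
    (fun d => by have := bdry_nonneg ν d; push_cast; omega)
    (fun d => by
      have e1 := bdry_pred ν (d + 1)
      have e2 := cov_step n F (d + 1)
      have e3 := hstep (d + 1)
      rw [add_sub_cancel_right] at e1 e2
      omega)
    (fun d => by
      have e1 := bdry_pred ν (d + 1)
      have e2 := cov_step n F (d + 1)
      have e3 := hstep (d + 1)
      rw [add_sub_cancel_right] at e1 e2
      omega)
    ⟨M, by simp only [(inBox_iff.1 hb).2, hcov M (Or.inr le_rfl)]⟩
    ⟨N, by simp only [(inBox_iff.1 hb).1, hcov (-N) (Or.inl le_rfl), add_zero]⟩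
  have hv : Valid n h ν ν' F := by
    refine ⟨fun d => congrFun hν' d, ?_, ?_⟩
    · intro hh p hp hbd
      have h2 := hFrange _ hp
      have h3 := hFr _ hp
      have h4 := (hok ⟨(p + n + N - 1).toNat, by omega⟩).2.2.1 hh
      rw [hlab, moveLabels_castSucc_zero, diagBoundary_eq hb] at h4
      have h5 : (((p + n + N - 1).toNat : ℕ) : ℤ) + 1 - N = p + n := by omega
      simp only [h5, add_sub_cancel_right, hp, hbd] at h4
      simp at h4
    · intro hh p hp
      have h2 := hFrange _ hp
      have h4 := (hok ⟨(p + N - 1).toNat, by omega⟩).2.2.2 hh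
      rw [hlab, moveLabels_succ_last hn, diagBoundary_eq hb] at h4
      have h5 : (((p + N - 1).toNat : ℕ) : ℤ) + 1 - N = p := by omega
      simp only [h5, hp] at h4
      simpa using h4
  have hb' : InBox N M ν' := by
    rw [inBox_iff, hv.1, hv.1, hcov _ (Or.inl le_rfl), hcov _ (Or.inr le_rfl)]
    exact inBox_iff.1 hb
  refine ⟨F, ν', hv, hb', ?_, hlab⟩
  funext c
  rw [diagBoundary_eq hb']
  have h2 := hbal c
  rw [hv.bead_eq, ← toNat_bead] at h2
  have h3 := Nat.add_right_cancel h2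
  revert h3
  generalize decide (bead ν' ((c.val : ℤ) + 1 - N)) = b
  cases b <;> cases V' c <;> simp

/-- The labels of a diagram in the box determine it. -/
lemma diagBoundary_injOn (hC : C = M + N) {ν ν' : YoungDiagram} (hb : InBox N M ν)
    (hb' : InBox N M ν') (he : diagBoundary ν N C = diagBoundary ν' N C) : ν = ν' := by
  have hbd : ∀ c, -(N : ℤ) < c → c ≤ M → beadN ν c = beadN ν' c := by
    intro c h1 h2
    have h3 := congrFun he ⟨(c + N - 1).toNat, by omega⟩
    rw [diagBoundary_eq hb, diagBoundary_eq hb'] at h3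
    have h4 : (((c + N - 1).toNat : ℕ) : ℤ) + 1 - N = c := by omega
    simp only [h4] at h3
    rw [← toNat_bead, ← toNat_bead, h3]
  apply bdry_injective
  funext d
  by_cases hd : d ≤ -(N : ℤ)
  · have h1 := hb.bdry_left hd
    have h2 := hb'.bdry_left hd
    omega
  have key : ∀ d : ℤ, -(N : ℤ) ≤ d → d ≤ M → bdry ν d = bdry ν' d := by
    intro d hd
    induction d, hd using Int.leInduction with
    | base =>
      intro _
      rw [(inBox_iff.1 hb).1, (inBox_iff.1 hb').1]
    | succ k hk ih =>
      intro hk2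
      have h1 := bdry_pred ν (k + 1)
      have h2 := bdry_pred ν' (k + 1)
      have h3 := hbd (k + 1) (by omega) hk2
      have h4 := ih (by omega)
      rw [add_sub_cancel_right] at h1 h2
      omega
  by_cases hd2 : d ≤ M
  · exact key d (by omega) hd2
  · rw [hb.bdry_right (by omega), hb'.bdry_right (by omega)]

/-- A row acts on the diagrams in the box by the generating function of ribbon strips. -/
lemma rowZ_diag {R : Type*} [CommRing R] (hn : 0 < n) {h : Bool} {q w : R}
    {ν ν' : YoungDiagram} (hC : C = M + N) (hb : InBox N M ν) (hb' : InBox N M ν') :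
    rowZ n C (rowTab h q w) (diagBoundary ν N C) (diagBoundary ν' N C) =
      rowT n h q w ν ν' := by
  unfold rowZ
  have hsub : ∀ hE : Fin (C + 1) → Fin n → Bool, hE 0 = (fun _ => false) →
      hE (Fin.last C) = (fun _ => false) →
      rowWeight n C (rowTab h q w) (diagBoundary ν N C) (diagBoundary ν' N C) hE ≠ 0 →
      ∃ F, Valid n h ν ν' F ∧ hE = moveLabels n C N F := by
    intro hE h0 h1 hw
    obtain ⟨F, κ, hv, hbκ, he, hl⟩ := exists_valid_of_row hn (h := h) hC hb h0 h1
      fun c => vertexOK_of_weight_ne hn fun hc => hw (prod_eq_zero (mem_univ c) hc)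
    rw [diagBoundary_injOn hC hb' hbκ he]
    exact ⟨F, hv, hl⟩
  by_cases hex : ∃ F, Valid n h ν ν' F
  · obtain ⟨F, hv⟩ := hex
    rw [sum_eq_single (moveLabels n C N F), hv.rowWeight hn hC hb hb']
    · intro hE hmem hne
      obtain ⟨-, h0, h1⟩ := mem_filter.1 hmem
      by_contra hw
      obtain ⟨F', hv', hl⟩ := hsub hE h0 h1 hw
      rw [hv.unique hn hv'] at hne
      exact hne hl
    · intro hmem
      exact absurd (mem_filter.2 ⟨mem_univ _, hv.moveLabels_zero hn hb hb',
        hv.moveLabels_last hn hC hb hb'⟩) hmem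
  · rw [rowT_of_not_valid hn hex]
    refine sum_eq_zero fun hE hmem => ?_
    obtain ⟨-, h0, h1⟩ := mem_filter.1 hmem
    by_contra hw
    obtain ⟨F', hv', -⟩ := hsub hE h0 h1 hw
    exact hex ⟨F', hv'⟩

lemma exists_diag_of_rowZ_ne {R : Type*} [CommRing R] (hn : 0 < n) {h : Bool} {q w : R}
    {ν : YoungDiagram} (hC : C = M + N) (hb : InBox N M ν) {V' : Fin C → Bool}
    (hne : rowZ n C (rowTab h q w) (diagBoundary ν N C) V' ≠ 0) :
    ∃ ν', InBox N M ν' ∧ V' = diagBoundary ν' N C := by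
  obtain ⟨hE, hmem, hw⟩ := exists_ne_zero_of_sum_ne_zero hne
  obtain ⟨-, h0, h1⟩ := mem_filter.1 hmem
  obtain ⟨F, κ, hv, hbκ, he, hl⟩ := exists_valid_of_row hn (h := h) hC hb h0 h1
    fun c => vertexOK_of_weight_ne hn fun hc => hw (prod_eq_zero (mem_univ c) hc)
  exact ⟨κ, hbκ, he⟩

end

/-! ### Tableaux as chains of strips -/

/-- The rows of the lattice model decouple once the vertical labels are fixed. -/
lemma partitionZ_eq_sum_prod_rowZ {R : Type*} [CommRing R] (n m C : ℕ)
    (tab : Fin m → VertexType → ℕ → R) (top bottom : Fin C → Bool) :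
    partitionZ n m C tab top bottom (fun _ _ => false) (fun _ _ => false) =
      ∑ V ∈ univ.filter (fun V : Fin (m + 1) → Fin C → Bool =>
        V 0 = top ∧ V (Fin.last m) = bottom),
        ∏ i : Fin m, rowZ n C (tab i) (V i.castSucc) (V i.succ) := by
  classical
  unfold partitionZ
  have hset : (univ.filter (BoundaryCond top bottom (fun _ _ => false) (fun _ _ => false)) :
      Finset (GridState n m C)) =
      (univ.filter fun V : Fin (m + 1) → Fin C → Bool => V 0 = top ∧ V (Fin.last m) = bottom) ×ˢ
        Fintype.piFinset (fun _ : Fin m => univ.filter fun hE : Fin (C + 1) → Fin n → Bool =>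
          hE 0 = (fun _ => false) ∧ hE (Fin.last C) = fun _ => false) := by
    ext st
    simp only [BoundaryCond, mem_filter, mem_univ, true_and, mem_product, Fintype.mem_piFinset,
      and_assoc]
  rw [hset, sum_product]
  refine sum_congr rfl fun V _ => ?_
  unfold rowZ
  rw [prod_univ_sum]
  rfl

section
variable {n m : ℕ} {L : Type*} {μ lam : YoungDiagram}

/-- `κ k` is the shape formed by `μ` and the ribbons of `T` with one of the first `k` labels. -/
def Compat (μ : YoungDiagram) (e : Fin m ≃ L) (T : Finset (Finset (ℕ × ℕ) × L))
    (κ : Fin (m + 1) → YoungDiagram) : Prop :=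
  ∀ k, ∀ c, c ∈ κ k ↔ c ∈ μ ∨ ∃ p ∈ T, (e.symm p.2).val < k.val ∧ c ∈ p.1

lemma Compat.unique {e : Fin m ≃ L} {T : Finset (Finset (ℕ × ℕ) × L)}
    {κ κ' : Fin (m + 1) → YoungDiagram} (h : Compat μ e T κ) (h' : Compat μ e T κ') : κ = κ' := by
  funext k
  ext c
  rw [YoungDiagram.mem_cells, YoungDiagram.mem_cells, h, h']

lemma Compat.zero {e : Fin m ≃ L} {T : Finset (Finset (ℕ × ℕ) × L)}
    {κ : Fin (m + 1) → YoungDiagram} (h : Compat μ e T κ) : κ 0 = μ := by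
  ext c
  rw [YoungDiagram.mem_cells, YoungDiagram.mem_cells, h]
  simp

lemma mem_sup_fst {T : Finset (Finset (ℕ × ℕ) × L)} {c : ℕ × ℕ} :
    c ∈ T.sup (fun p => p.1) ↔ ∃ p ∈ T, c ∈ p.1 := by
  rw [Finset.mem_sup]

lemma IsSuperTableau.mem_iff {le : L → L → Prop} {horiz : L → Prop}
    {T : Finset (Finset (ℕ × ℕ) × L)} (hT : IsSuperTableau n μ lam le horiz T) {c : ℕ × ℕ} :
    (∃ p ∈ T, c ∈ p.1) ↔ c ∈ lam ∧ c ∉ μ := by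
  rw [← mem_sup_fst, hT.2.2.2.1, mem_sdiff, YoungDiagram.mem_cells, YoungDiagram.mem_cells]

lemma Compat.le {e : Fin m ≃ L} {T : Finset (Finset (ℕ × ℕ) × L)}
    {κ : Fin (m + 1) → YoungDiagram} (h : Compat μ e T κ) {le : L → L → Prop} {horiz : L → Prop}
    (hT : IsSuperTableau n μ lam le horiz T) (k : Fin (m + 1)) : κ k ≤ lam := by
  intro c hc
  rcases (h k c).1 hc with hc | ⟨p, hp, -, hc⟩
  · exact hT.1 hc
  · exact (hT.mem_iff.1 ⟨p, hp, hc⟩).1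

lemma Compat.last {e : Fin m ≃ L} {T : Finset (Finset (ℕ × ℕ) × L)}
    {κ : Fin (m + 1) → YoungDiagram} (h : Compat μ e T κ) {le : L → L → Prop} {horiz : L → Prop}
    (hT : IsSuperTableau n μ lam le horiz T) : κ (Fin.last m) = lam := by
  refine le_antisymm (h.le hT _) fun c hc => (h _ c).2 ?_
  by_cases hm : c ∈ μ
  · exact Or.inl hm
  · obtain ⟨p, hp, hcp⟩ := hT.mem_iff.2 ⟨hc, hm⟩
    exact Or.inr ⟨p, hp, (e.symm p.2).2, hcp⟩

lemma IsSuperTableau.exists_compat {le : L → L → Prop} {horiz : L → Prop} {e : Fin m ≃ L}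
    (hle : ∀ i j, le (e i) (e j) ↔ i ≤ j)
    {T : Finset (Finset (ℕ × ℕ) × L)} (hT : IsSuperTableau n μ lam le horiz T) :
    ∃ κ, Compat μ e T κ := by
  classical
  have : ∀ k : Fin (m + 1), ∃ κ : YoungDiagram, ∀ c, c ∈ κ ↔
      c ∈ μ ∨ ∃ p ∈ T, (e.symm p.2).val < k.val ∧ c ∈ p.1 := by
    intro k
    refine Fin.cases ?_ (fun i => ?_) k
    · exact ⟨μ, fun c => by simp⟩
    · obtain ⟨κ, hκ⟩ := hT.2.2.2.2.1 (e i)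
      refine ⟨κ, fun c => ?_⟩
      rw [← YoungDiagram.mem_cells, hκ, mem_union, mem_sup_fst, YoungDiagram.mem_cells]
      refine or_congr_right (exists_congr fun p => ?_)
      rw [mem_filter, and_assoc]
      refine and_congr_right fun _ => and_congr_left fun _ => ?_
      have := hle (e.symm p.2) i
      rw [e.apply_symm_apply] at this
      rw [this, Fin.val_succ, Fin.le_def]
      omega
  choose κ hκ using this
  exact ⟨κ, hκ⟩

/-- In a tableau the ribbons with the `i`-th label fill the difference of two consecutive
shapes. -/
lemma Compat.mem_sdiff_iff {e : Fin m ≃ L} {T : Finset (Finset (ℕ × ℕ) × L)}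
    {κ : Fin (m + 1) → YoungDiagram} (h : Compat μ e T κ) {le : L → L → Prop} {horiz : L → Prop}
    (hT : IsSuperTableau n μ lam le horiz T) (i : Fin m) (c : ℕ × ℕ) :
    c ∈ (κ i.succ).cells \ (κ i.castSucc).cells ↔ ∃ p ∈ T, p.2 = e i ∧ c ∈ p.1 := by
  rw [mem_sdiff, YoungDiagram.mem_cells, YoungDiagram.mem_cells, h, h]
  constructor
  · rintro ⟨h1 | ⟨p, hp, h1, hc⟩, h2⟩
    · exact absurd (Or.inl h1) h2
    · refine ⟨p, hp, ?_, hc⟩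
      rw [← e.symm_apply_eq]
      by_contra hne
      refine h2 (Or.inr ⟨p, hp, ?_, hc⟩)
      rw [Fin.ext_iff] at hne
      simp only [Fin.val_succ, Fin.val_castSucc] at h1 ⊢
      omega
  · rintro ⟨p, hp, hpi, hc⟩
    refine ⟨Or.inr ⟨p, hp, by rw [hpi]; simp, hc⟩, ?_⟩
    rintro (h1 | ⟨p', hp', h1, hc'⟩)
    · exact (hT.mem_iff.1 ⟨p, hp, hc⟩).2 h1
    · have hne : p ≠ p' := by
        rintro rfl
        rw [hpi] at h1
        simp at h1
      exact (disjoint_left.1 (hT.2.2.1 p hp p' hp' hne)) hc hc'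

open scoped Classical in
/-- The ribbons of `T` with the `i`-th label. -/
noncomputable def layer (e : Fin m ≃ L) (T : Finset (Finset (ℕ × ℕ) × L)) (i : Fin m) :
    Finset (Finset (ℕ × ℕ)) :=
  (T.filter fun p => p.2 = e i).image Prod.fst

open scoped Classical in
/-- The ribbons of all `S i`, those of `S i` carrying the `i`-th label. -/
noncomputable def glue (e : Fin m ≃ L) (S : Fin m → Finset (Finset (ℕ × ℕ))) :
    Finset (Finset (ℕ × ℕ) × L) :=
  (univ.sigma S).image fun x => (x.2, e x.1)

lemma mem_layer {e : Fin m ≃ L} {T : Finset (Finset (ℕ × ℕ) × L)} {i : Fin m}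
    {t : Finset (ℕ × ℕ)} : t ∈ layer e T i ↔ (t, e i) ∈ T := by
  classical
  unfold layer
  rw [mem_image]
  constructor
  · rintro ⟨⟨t', a⟩, hp, rfl⟩
    obtain ⟨h1, rfl⟩ := mem_filter.1 hp
    exact h1
  · intro h
    exact ⟨_, mem_filter.2 ⟨h, rfl⟩, rfl⟩

lemma mem_glue {e : Fin m ≃ L} {S : Fin m → Finset (Finset (ℕ × ℕ))} {i : Fin m}
    {t : Finset (ℕ × ℕ)} : (t, e i) ∈ glue e S ↔ t ∈ S i := by
  classical
  unfold glue
  rw [mem_image]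
  constructor
  · rintro ⟨⟨j, t'⟩, hp, h⟩
    rw [Prod.mk.injEq, e.apply_eq_iff_eq] at h
    obtain ⟨rfl, rfl⟩ := h
    exact (mem_sigma.1 hp).2
  · intro h
    exact ⟨⟨i, t⟩, mem_sigma.2 ⟨mem_univ _, h⟩, rfl⟩

lemma exists_mem_glue {e : Fin m ≃ L} {S : Fin m → Finset (Finset (ℕ × ℕ))}
    {Q : Finset (ℕ × ℕ) → L → Prop} :
    (∃ p ∈ glue e S, Q p.1 p.2) ↔ ∃ i, ∃ t ∈ S i, Q t (e i) := by
  constructor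
  · rintro ⟨⟨t, a⟩, hp, hQ⟩
    obtain ⟨i, rfl⟩ := e.surjective a
    exact ⟨i, t, mem_glue.1 hp, hQ⟩
  · rintro ⟨i, t, ht, hQ⟩
    exact ⟨(t, e i), mem_glue.2 ht, hQ⟩

lemma layer_glue (e : Fin m ≃ L) (S : Fin m → Finset (Finset (ℕ × ℕ))) :
    layer e (glue e S) = S := by
  funext i
  ext t
  rw [mem_layer, mem_glue]

lemma glue_layer (e : Fin m ≃ L) (T : Finset (Finset (ℕ × ℕ) × L)) :
    glue e (layer e T) = T := by
  ext ⟨t, a⟩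
  obtain ⟨i, rfl⟩ := e.surjective a
  rw [mem_glue, mem_layer]

lemma glue_injOn (e : Fin m ≃ L) (s : Set (Σ _ : Fin m, Finset (ℕ × ℕ))) :
    Set.InjOn (fun x : Σ _ : Fin m, Finset (ℕ × ℕ) => (x.2, e x.1)) s := by
  rintro ⟨i, t⟩ - ⟨j, t'⟩ - h
  rw [Prod.mk.injEq, e.apply_eq_iff_eq] at h
  obtain ⟨rfl, rfl⟩ := h
  rfl

lemma tabSpin_glue (e : Fin m ≃ L) (S : Fin m → Finset (Finset (ℕ × ℕ))) :
    tabSpin (glue e S) = ∑ i, ∑ t ∈ S i, spin t := by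
  classical
  unfold tabSpin glue
  rw [sum_image (glue_injOn e _), sum_sigma]

lemma tabWt_glue (e : Fin m ≃ L) (S : Fin m → Finset (Finset (ℕ × ℕ))) (i : Fin m) :
    tabWt (glue e S) (e i) = (S i).card := by
  classical
  unfold tabWt
  refine (card_bij (fun t _ => (t, e i)) ?_ ?_ ?_).symm
  · intro t ht
    exact mem_filter.2 ⟨mem_glue.2 ht, rfl⟩
  · intro t _ t' _ h
    exact (Prod.mk.injEq _ _ _ _ ▸ h).1
  · rintro ⟨t, a⟩ hp
    obtain ⟨h1, rfl⟩ := mem_filter.1 hp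
    exact ⟨t, mem_glue.1 h1, rfl⟩

/-- The layers of a tableau are strips. -/
lemma Compat.stripTiling {e : Fin m ≃ L} {T : Finset (Finset (ℕ × ℕ) × L)}
    {κ : Fin (m + 1) → YoungDiagram} (h : Compat μ e T κ) {le : L → L → Prop} {horiz : L → Prop}
    {hz : Fin m → Bool} (hh : ∀ i, horiz (e i) ↔ hz i = true)
    (hT : IsSuperTableau n μ lam le horiz T) (i : Fin m) :
    StripTiling n (hz i) (κ i.castSucc) (κ i.succ) (layer e T i) := by
  classical
  have hstrip : ((T.filter fun p' => p'.2 = e i).sup fun p' => p'.1) =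
      (κ i.succ).cells \ (κ i.castSucc).cells := by
    ext c
    rw [h.mem_sdiff_iff hT, mem_sup_fst]
    simp only [mem_filter, and_assoc]
  refine ⟨?_, ⟨?_, ?_, ?_⟩, ?_⟩
  · intro c hc
    rcases (h _ c).1 hc with hc | ⟨p, hp, h1, hc⟩
    · exact (h _ c).2 (Or.inl hc)
    · refine (h _ c).2 (Or.inr ⟨p, hp, ?_, hc⟩)
      simp only [Fin.val_succ, Fin.val_castSucc] at h1 ⊢
      omega
  · intro t ht
    exact hT.2.1 _ (mem_layer.1 ht)
  · intro t ht t' ht' hne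
    refine hT.2.2.1 _ (mem_layer.1 ht) _ (mem_layer.1 ht') fun hc => hne ?_
    exact congrArg Prod.fst hc
  · rw [← hstrip]
    ext c
    rw [Finset.mem_sup, mem_sup_fst]
    simp only [id, mem_layer, mem_filter]
    constructor
    · rintro ⟨t, ht, hc⟩
      exact ⟨_, ⟨ht, rfl⟩, hc⟩
    · rintro ⟨⟨t, a⟩, ⟨ht, rfl⟩, hc⟩
      exact ⟨t, ht, hc⟩
  · intro t ht
    have h1 := hT.2.2.2.2.2 _ (mem_layer.1 ht)
    rw [hstrip, hh] at h1
    refine ⟨h1.1, fun hf => h1.2 ?_⟩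
    simp [hf]

lemma glue_compat {e : Fin m ≃ L} {κ : Fin (m + 1) → YoungDiagram} {hz : Fin m → Bool}
    {S : Fin m → Finset (Finset (ℕ × ℕ))} (h0 : κ 0 = μ)
    (hS : ∀ i, StripTiling n (hz i) (κ i.castSucc) (κ i.succ) (S i)) :
    Compat μ e (glue e S) κ := by
  intro k c
  rw [exists_mem_glue (Q := fun t a => (e.symm a).val < k.val ∧ c ∈ t)]
  simp only [e.symm_apply_apply]
  induction k using Fin.induction with
  | zero => rw [h0]; simp
  | succ i ih =>
    have h1 : c ∈ (κ i.succ) ↔ c ∈ κ i.castSucc ∨ ∃ t ∈ S i, c ∈ t := by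
      have h2 : c ∈ (S i).sup id ↔ c ∈ κ i.succ ∧ c ∉ κ i.castSucc := by
        rw [(hS i).2.1.2.2, mem_sdiff, YoungDiagram.mem_cells, YoungDiagram.mem_cells]
      have h3 : c ∈ κ i.castSucc → c ∈ κ i.succ := fun hc => (hS i).1 hc
      rw [Finset.mem_sup] at h2
      simp only [id] at h2
      rw [h2]
      tauto
    rw [h1, ih, or_assoc]
    refine or_congr_right ?_
    simp only [Fin.val_succ, Fin.val_castSucc]
    constructor
    · rintro (⟨j, t, ht, h2, h3⟩ | ⟨t, ht, h2⟩)
      · exact ⟨j, t, ht, by omega, h3⟩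
      · exact ⟨i, t, ht, by omega, h2⟩
    · rintro ⟨j, t, ht, h2, h3⟩
      by_cases hj : j = i
      · subst hj
        exact Or.inr ⟨t, ht, h3⟩
      · rw [Fin.ext_iff] at hj
        exact Or.inl ⟨j, t, ht, by omega, h3⟩

/-- A chain of strips gives a tableau. -/
lemma glue_isSuperTableau {e : Fin m ≃ L} {κ : Fin (m + 1) → YoungDiagram} {hz : Fin m → Bool}
    {le : L → L → Prop} {horiz : L → Prop} (hle : ∀ i j, le (e i) (e j) ↔ i ≤ j)
    (hh : ∀ i, horiz (e i) ↔ hz i = true)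
    {S : Fin m → Finset (Finset (ℕ × ℕ))} (hμ : μ ≤ lam) (h0 : κ 0 = μ)
    (hl : κ (Fin.last m) = lam)
    (hS : ∀ i, StripTiling n (hz i) (κ i.castSucc) (κ i.succ) (S i)) :
    IsSuperTableau n μ lam le horiz (glue e S) := by
  classical
  have hcompat := glue_compat (e := e) h0 hS
  have hmono : Monotone κ := Fin.monotone_iff_le_succ.2 fun i => (hS i).1
  have hmem : ∀ i, ∀ t ∈ S i, ∀ c ∈ t, c ∈ κ i.succ ∧ c ∉ κ i.castSucc := by
    intro i t ht c hc
    have : c ∈ (S i).sup id := Finset.mem_sup.2 ⟨t, ht, hc⟩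
    rwa [(hS i).2.1.2.2, mem_sdiff, YoungDiagram.mem_cells, YoungDiagram.mem_cells] at this
  have hlt : ∀ i j, i < j → ∀ t ∈ S i, ∀ t' ∈ S j, Disjoint t t' := by
    intro i j hij t ht t' ht'
    rw [disjoint_left]
    intro c hc hc'
    refine (hmem j t' ht' c hc').2 (hmono ?_ (hmem i t ht c hc).1)
    rw [Fin.le_def]
    rw [Fin.lt_def] at hij
    simp only [Fin.val_succ, Fin.val_castSucc]
    omega
  refine ⟨hμ, ?_, ?_, ?_, ?_, ?_⟩
  · rintro ⟨t, a⟩ hp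
    obtain ⟨i, rfl⟩ := e.surjective a
    exact (hS i).2.1.1 t (mem_glue.1 hp)
  · rintro ⟨t, a⟩ hp ⟨t', a'⟩ hp' hne
    obtain ⟨i, rfl⟩ := e.surjective a
    obtain ⟨j, rfl⟩ := e.surjective a'
    rw [mem_glue] at hp hp'
    rcases lt_trichotomy i j with hij | rfl | hij
    · exact hlt i j hij t hp t' hp'
    · refine (hS i).2.1.2.1 t hp t' hp' ?_
      rintro rfl
      exact hne rfl
    · exact (hlt j i hij t' hp' t hp).symm
  · ext c
    rw [mem_sup_fst, exists_mem_glue (Q := fun t _ => c ∈ t), mem_sdiff, YoungDiagram.mem_cells,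
      YoungDiagram.mem_cells]
    constructor
    · rintro ⟨i, t, ht, hc⟩
      obtain ⟨h1, h2⟩ := hmem i t ht c hc
      refine ⟨?_, fun hm => h2 ?_⟩
      · rw [← hl]; exact hmono (Fin.le_last _) h1
      · rw [← h0] at hm; exact hmono (Fin.zero_le _) hm
    · rintro ⟨h1, h2⟩
      rw [← hl, hcompat, exists_mem_glue (Q := fun t a => (e.symm a).val < _ ∧ c ∈ t)] at h1
      rcases h1 with h1 | ⟨i, t, ht, -, hc⟩
      · exact absurd h1 h2
      · exact ⟨i, t, ht, hc⟩
  · intro a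
    obtain ⟨i, rfl⟩ := e.surjective a
    refine ⟨κ i.succ, ?_⟩
    ext c
    rw [YoungDiagram.mem_cells, hcompat, mem_union, mem_sup_fst, YoungDiagram.mem_cells]
    refine or_congr_right (exists_congr fun p => ?_)
    rw [mem_filter, and_assoc]
    refine and_congr_right fun _ => and_congr_left fun _ => ?_
    have := hle (e.symm p.2) i
    rw [e.apply_symm_apply] at this
    rw [this, Fin.val_succ, Fin.le_def]
    omega
  · rintro ⟨t, a⟩ hp
    obtain ⟨i, rfl⟩ := e.surjective a
    rw [mem_glue] at hp
    have hstrip : (((glue e S).filter fun p' => p'.2 = e i).sup fun p' => p'.1) =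
        (κ i.succ).cells \ (κ i.castSucc).cells := by
      rw [← (hS i).2.1.2.2]
      ext c
      rw [mem_sup_fst, Finset.mem_sup]
      constructor
      · rintro ⟨⟨t, a⟩, hp, hc⟩
        obtain ⟨h1, rfl⟩ := mem_filter.1 hp
        exact ⟨t, mem_glue.1 h1, hc⟩
      · rintro ⟨t, ht, hc⟩
        exact ⟨(t, e i), mem_filter.2 ⟨mem_glue.2 ht, rfl⟩, hc⟩
    simp only
    rw [hstrip, hh]
    have h1 := (hS i).2.2 t hp
    refine ⟨h1.1, fun hf => h1.2 ?_⟩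
    simpa using hf

open scoped Classical in
/-- The vertical labels of the lattice model attached to a tableau: the labels of its chain of
shapes (a junk value if there is no such chain). -/
noncomputable def tabLabels (N C : ℕ) (μ : YoungDiagram) (e : Fin m ≃ L)
    (T : Finset (Finset (ℕ × ℕ) × L)) : Fin (m + 1) → Fin C → Bool :=
  if h : ∃ κ, Compat μ e T κ then fun k => diagBoundary (h.choose k) N C else fun _ _ => false

lemma Compat.tabLabels_eq {N C : ℕ} {e : Fin m ≃ L} {T : Finset (Finset (ℕ × ℕ) × L)}
    {κ : Fin (m + 1) → YoungDiagram} (h : Compat μ e T κ) :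
    tabLabels N C μ e T = fun k => diagBoundary (κ k) N C := by
  have hex : ∃ κ, Compat μ e T κ := ⟨κ, h⟩
  unfold tabLabels
  rw [dif_pos hex, hex.choose_spec.unique h]

variable [Fintype L]

lemma mem_superTableaux {le : L → L → Prop} {horiz : L → Prop}
    {T : Finset (Finset (ℕ × ℕ) × L)} :
    T ∈ superTableaux n μ lam L le horiz ↔ IsSuperTableau n μ lam le horiz T := by
  classical
  unfold superTableaux
  rw [mem_filter, and_iff_right_iff_imp]
  intro hT
  rw [mem_powerset]
  intro p hp
  rw [mem_product, mem_powerset, ← hT.2.2.2.1]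
  exact ⟨le_sup (f := fun p : Finset (ℕ × ℕ) × L => p.1) hp, mem_univ _⟩

open scoped Classical in
/-- The tableaux with a prescribed chain of shapes are counted by the product of the generating
functions of the strips of the chain. -/
lemma prod_rowT {R : Type*} [CommRing R] {e : Fin m ≃ L} {κ : Fin (m + 1) → YoungDiagram}
    {hz : Fin m → Bool} {le : L → L → Prop} {horiz : L → Prop}
    (hle : ∀ i j, le (e i) (e j) ↔ i ≤ j) (hh : ∀ i, horiz (e i) ↔ hz i = true)
    (hμ : μ ≤ lam) (h0 : κ 0 = μ) (hl : κ (Fin.last m) = lam) (q : R) (w : L → R) :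
    ∏ i, rowT n (hz i) q (w (e i)) (κ i.castSucc) (κ i.succ) =
      ∑ T ∈ (superTableaux n μ lam L le horiz).filter (fun T => Compat μ e T κ),
        q ^ tabSpin T * ∏ a : L, w a ^ tabWt T a := by
  unfold rowT
  rw [prod_univ_sum]
  refine sum_nbij' (glue e) (layer e) ?_ ?_ ?_ ?_ ?_
  · intro S hS
    rw [Fintype.mem_piFinset] at hS
    have hS' := fun i => mem_stripTilings.1 (hS i)
    rw [mem_filter, mem_superTableaux]
    exact ⟨glue_isSuperTableau hle hh hμ h0 hl hS', glue_compat h0 hS'⟩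
  · intro T hT
    rw [mem_filter, mem_superTableaux] at hT
    rw [Fintype.mem_piFinset]
    exact fun i => mem_stripTilings.2 (hT.2.stripTiling hh hT.1 i)
  · intro S _
    exact layer_glue e S
  · intro T _
    exact glue_layer e T
  · intro S _
    rw [tabSpin_glue, ← e.prod_comp]
    simp only [tabWt_glue]
    rw [prod_mul_distrib, prod_pow_eq_pow_sum]

/-- The identity of the partition function and the super LLT polynomial, for labels enumerated
by `e` and signed variables `w`. -/
lemma partitionZ_eq_sum_tableaux {R : Type*} [CommRing R] {N M C : ℕ} (hn : 0 < n)
    {e : Fin m ≃ L} {hz : Fin m → Bool} {le : L → L → Prop} {horiz : L → Prop}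
    (hle : ∀ i j, le (e i) (e j) ↔ i ≤ j) (hh : ∀ i, horiz (e i) ↔ hz i = true)
    (hμ : μ ≤ lam) (hC : C = M + N) (hb : InBox N M lam) (q : R) (w : L → R) :
    partitionZ n m C (fun i => rowTab (hz i) q (w (e i))) (diagBoundary μ N C)
      (diagBoundary lam N C) (fun _ _ => false) (fun _ _ => false) =
      ∑ T ∈ superTableaux n μ lam L le horiz, q ^ tabSpin T * ∏ a : L, w a ^ tabWt T a := by
  classical
  rw [partitionZ_eq_sum_prod_rowZ]
  have hmap : ∀ T ∈ superTableaux n μ lam L le horiz, tabLabels N C μ e T ∈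
      univ.filter (fun V : Fin (m + 1) → Fin C → Bool =>
        V 0 = diagBoundary μ N C ∧ V (Fin.last m) = diagBoundary lam N C) := by
    intro T hT
    rw [mem_superTableaux] at hT
    obtain ⟨κ, hκ⟩ := hT.exists_compat hle
    rw [mem_filter, hκ.tabLabels_eq]
    exact ⟨mem_univ _, congrArg (diagBoundary · N C) hκ.zero,
      congrArg (diagBoundary · N C) (hκ.last hT)⟩
  rw [← sum_fiberwise_of_maps_to hmap]
  refine sum_congr rfl fun V hV => ?_
  obtain ⟨-, hV0, hVl⟩ := mem_filter.1 hV
  by_cases hex : ∃ κ : Fin (m + 1) → YoungDiagram,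
      ∀ k, InBox N M (κ k) ∧ V k = diagBoundary (κ k) N C
  · obtain ⟨κ, hκ⟩ := hex
    have h0 : κ 0 = μ := diagBoundary_injOn hC (hκ 0).1 (hb.mono hμ) (by rw [← (hκ 0).2, hV0])
    have hl : κ (Fin.last m) = lam :=
      diagBoundary_injOn hC (hκ _).1 hb (by rw [← (hκ _).2, hVl])
    have h1 : ∀ i : Fin m, rowZ n C (rowTab (hz i) q (w (e i))) (V i.castSucc) (V i.succ) =
        rowT n (hz i) q (w (e i)) (κ i.castSucc) (κ i.succ) := by
      intro i
      rw [(hκ i.castSucc).2, (hκ i.succ).2, rowZ_diag hn hC (hκ _).1 (hκ _).1]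
    rw [prod_congr rfl fun i _ => h1 i, prod_rowT hle hh hμ h0 hl]
    refine sum_congr (filter_congr fun T hT => ?_) fun _ _ => rfl
    rw [mem_superTableaux] at hT
    obtain ⟨κ', hκ'⟩ := hT.exists_compat hle
    constructor
    · intro h
      rw [h.tabLabels_eq]
      funext k
      rw [(hκ k).2]
    · intro h
      have : κ = κ' := by
        funext k
        refine diagBoundary_injOn hC (hκ k).1 (hb.mono (hκ'.le hT k)) ?_
        rw [← (hκ k).2, ← h, hκ'.tabLabels_eq]
      rw [this]
      exact hκ'
  · rw [filter_eq_empty_iff.2, sum_empty]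
    · by_contra hne
      refine hex ?_
      have : ∀ k, ∃ κ, InBox N M κ ∧ V k = diagBoundary κ N C := by
        intro k
        induction k using Fin.induction with
        | zero => exact ⟨μ, hb.mono hμ, hV0⟩
        | succ i ih =>
          obtain ⟨κ, hκ, hVκ⟩ := ih
          have h1 : rowZ n C (rowTab (hz i) q (w (e i))) (V i.castSucc) (V i.succ) ≠ 0 :=
            fun hc => hne (prod_eq_zero (mem_univ i) hc)
          rw [hVκ] at h1
          exact exists_diag_of_rowZ_ne hn hC hκ h1
      choose κ hκ using this
      exact ⟨κ, hκ⟩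
    · intro T hT h
      rw [mem_superTableaux] at hT
      obtain ⟨κ', hκ'⟩ := hT.exists_compat hle
      refine hex ⟨κ', fun k => ⟨hb.mono (hκ'.le hT k), ?_⟩⟩
      rw [← h, hκ'.tabLabels_eq]

end

/-- **The super ribbon lattice model computes super LLT polynomials**
(Theorem `mainthm`).  Let `n ≥ 1`, let `lam/μ` be a skew shape, let `A = Fin r`
(horizontal letters), `A' = Fin s` (vertical letters) carry a total order `ord` on
`A ⊕ A'` refining both natural orders, and let `N` be at least the number of parts of
`lam`.  The grid has one row per letter (rows listed from top to bottom in increasing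
order, via the increasing enumeration `e`) and `lam₁ + N` columns; row weights are the
horizontal- resp. vertical-strip weights with spectral parameters `x a` resp. `y b`; the
side boundary edges are all `>`, the top boundary is given by `μ + ρ` and the bottom
boundary by `lam + ρ`.  Then the partition function equals the super LLT polynomial:
`Z(B_{lam/μ}(X/Y)) = G_{lam/μ}(X/Y; q)`. -/
theorem partitionZ_eq_superLLT (n : ℕ) (hn : 1 ≤ n) (μ lam : YoungDiagram)
    (hμlam : μ ≤ lam) (r s : ℕ) (ord : LinearOrder (Fin r ⊕ Fin s))
    (hordA : ∀ i j : Fin r, i ≤ j → ord.le (Sum.inl i) (Sum.inl j))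
    (hordA' : ∀ i j : Fin s, i ≤ j → ord.le (Sum.inr i) (Sum.inr j))
    (N : ℕ) (hN : lam.colLen 0 ≤ N)
    (e : Fin (r + s) ≃ (Fin r ⊕ Fin s))
    (he : ∀ i j : Fin (r + s), i < j → ord.lt (e i) (e j))
    (R : Type*) [CommRing R] (q : R) (x : Fin r → R) (y : Fin s → R) :
    partitionZ n (r + s) (lam.rowLen 0 + N)
        (fun i => Sum.elim (fun a => horizTable q (x a)) (fun b => vertTable q (y b)) (e i))
        (diagBoundary μ N (lam.rowLen 0 + N)) (diagBoundary lam N (lam.rowLen 0 + N))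
        (fun _ _ => false) (fun _ _ => false) =
      superLLT n μ lam (Fin r ⊕ Fin s) ord.le (fun a => a.isLeft = true) q
        (Sum.elim x y) := by
  have hle : ∀ i j, ord.le (e i) (e j) ↔ i ≤ j := by
    intro i j
    constructor
    · intro h
      by_contra hc
      exact ((ord.lt_iff_le_not_ge _ _).1 (he j i (not_le.1 hc))).2 h
    · intro h
      rcases h.eq_or_lt with rfl | h
      · exact ord.le_refl _
      · exact ((ord.lt_iff_le_not_ge _ _).1 (he i j h)).1
  have hb : InBox N (lam.rowLen 0) lam := by
    refine ⟨?_, ?_⟩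
    · rw [YoungDiagram.mem_iff_lt_colLen]; omega
    · rw [YoungDiagram.mem_iff_lt_rowLen]; omega
  have key := partitionZ_eq_sum_tableaux (n := n) (μ := μ) (lam := lam) (e := e)
    (hz := fun i => (e i).isLeft) (le := ord.le) (horiz := fun a => a.isLeft = true) hn hle
    (fun i => Iff.rfl) hμlam rfl hb q (Sum.elim x fun b => -y b)
  have htab : (fun i => rowTab (e i).isLeft q (Sum.elim x (fun b => -y b) (e i))) =
      fun i => Sum.elim (fun a => horizTable q (x a)) (fun b => vertTable q (y b)) (e i) := by
    funext i
    cases e i <;> simp [rowTab]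
  rw [htab] at key
  rw [key, superLLT]
  refine sum_congr rfl fun T _ => ?_
  congr 1
  refine prod_congr rfl fun a _ => ?_
  cases a <;> simp

end SuperLLT
end

section
/- Let n ≥ 1 and let λ/μ be a skew shape which is a single n-ribbon, and let N be an integer at least the number of parts of λ. Then the one-row n-ribbon lattice model with boundary condition B_{λ/μ} has exactly one admissible state; with horizontal-strip row weights and parameter x its weight is q^{spin(λ/μ)}·x, and with vertical-strip row weights and parameter y its weight is q^{spin(λ/μ)}·(−y). In particular the partition function equals q^{spin(λ/μ)}·x, resp. q^{spin(λ/μ)}·(−y). -/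
/-! The parts of `lam + ρ` are the column positions of the labels `∧`.  If the ribbon `lam / μ`
occupies the rows `a, …, d`, then connectedness and the absence of 2×2 squares give
`lam_{i+1} = μ_i + 1` for `a ≤ i < d` (`ribbon_rows`), so that part `i` of `μ + ρ` is part
`i + 1` of `lam + ρ`.  Hence `lam + ρ` arises from `μ + ρ` by replacing one part `b` (from row
`d`) by `b + n` (in row `a`), and the parts strictly between `b` and `b + n` are those of the
rows `a + 1, …, d` of `lam`; their number `d - a` is the spin (`ribbon_isJump`).

In the lattice model the west tuple and the vertical labels at an admissible vertex determine
its east tuple, because the number of labels `<` and `∧` is conserved.  Starting from `>`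
everywhere on the left, a single `<` is created at column `b` in position `n`, moves one
position per column, and is absorbed at column `b + n`; this is the only admissible state
(`jumpState_isRowState`, `eq_jumpState`).  Column `b` contributes `x` (resp. `-y`), each `∧`
strictly between `b` and `b + n` contributes `q`, and all other vertices contribute `1`
(`stateWeight_jumpState`). -/

open Finset

namespace SuperLLT

/-! ### Shape of a ribbon -/

section Shape

variable {μ lam : YoungDiagram}

lemma mem_skew {i j : ℕ} :
    (i, j) ∈ lam.cells \ μ.cells ↔ μ.rowLen i ≤ j ∧ j < lam.rowLen i := by
  rw [Finset.mem_sdiff, YoungDiagram.mem_cells, YoungDiagram.mem_cells,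
    YoungDiagram.mem_iff_lt_rowLen, YoungDiagram.mem_iff_lt_rowLen]
  omega

lemma rowLen_le (h : μ ≤ lam) (i : ℕ) : μ.rowLen i ≤ lam.rowLen i := by
  by_contra hlt
  push Not at hlt
  have h1 : (i, lam.rowLen i) ∈ μ := YoungDiagram.mem_iff_lt_rowLen.2 hlt
  have h2 : (i, lam.rowLen i) ∈ lam := h h1
  exact lt_irrefl _ (YoungDiagram.mem_iff_lt_rowLen.1 h2)

/-- A path from a row `≤ i` to a row `> i` must use a vertical step between rows `i` and
`i + 1`. -/
lemma exists_crossing_s11 {s : Finset (ℕ × ℕ)} (hs : ConnectedCells s) {c d : ℕ × ℕ}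
    (hc : c ∈ s) (hd : d ∈ s) {i : ℕ} (hci : c.1 ≤ i) (hid : i < d.1) :
    ∃ j, (i, j) ∈ s ∧ (i + 1, j) ∈ s := by
  by_contra hno
  push Not at hno
  have key : d.1 ≤ i := by
    have hp := hs c hc d hd
    clear hid hd
    induction hp with
    | refl => exact hci
    | tail _ hstep ih =>
      rename_i u v _
      obtain ⟨hu, hv, hadj⟩ := hstep
      obtain ⟨u1, u2⟩ := u
      obtain ⟨v1, v2⟩ := v
      simp only [Adj] at *
      by_contra hlt
      have e1 : u1 = i := by omega
      have e2 : v1 = i + 1 := by omega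
      have e3 : u2 = v2 := by omega
      subst e1 e2 e3
      exact hno u2 hu hv
  omega

/-- The row lengths of the two partitions bounding a ribbon occupying the rows `a, …, d`:
they agree outside these rows, the lower boundary follows the upper one shifted by the
vector `(1, 1)`, and the number of cells telescopes. -/
lemma ribbon_rows {n : ℕ} (hn : 1 ≤ n) (h : μ ≤ lam)
    (hrib : IsRibbon n (lam.cells \ μ.cells)) :
    ∃ a d : ℕ, a ≤ d ∧
      (∀ i, i < a ∨ d < i → lam.rowLen i = μ.rowLen i) ∧
      (∀ i, a ≤ i → i < d → lam.rowLen (i + 1) = μ.rowLen i + 1) ∧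
      μ.rowLen a < lam.rowLen a ∧ μ.rowLen d < lam.rowLen d ∧
      lam.rowLen a + d = μ.rowLen d + a + n ∧
      spin (lam.cells \ μ.cells) = d - a := by
  obtain ⟨hcard, -, hconn, hsq⟩ := hrib
  set s := lam.cells \ μ.cells with hsdef
  have hne : (s.image Prod.fst).Nonempty := by
    rw [Finset.image_nonempty, ← Finset.card_pos]
    omega
  have hrow : ∀ i, i ∈ s.image Prod.fst ↔ μ.rowLen i < lam.rowLen i := by
    intro i
    rw [Finset.mem_image]
    constructor
    · rintro ⟨⟨i', j⟩, hm, rfl⟩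
      have := mem_skew.1 hm
      dsimp only
      omega
    · intro hi
      exact ⟨(i, μ.rowLen i), mem_skew.2 ⟨le_rfl, hi⟩, rfl⟩
  obtain ⟨a, ha, hamin⟩ : ∃ a ∈ s.image Prod.fst, ∀ i ∈ s.image Prod.fst, a ≤ i :=
    ⟨_, Finset.min'_mem _ hne, fun i hi => Finset.min'_le _ i hi⟩
  obtain ⟨d, hd, hdmax⟩ : ∃ d ∈ s.image Prod.fst, ∀ i ∈ s.image Prod.fst, i ≤ d :=
    ⟨_, Finset.max'_mem _ hne, fun i hi => Finset.le_max' _ i hi⟩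
  have ha' := (hrow a).1 ha
  have hd' := (hrow d).1 hd
  have had := hamin d hd
  have hout : ∀ i, i < a ∨ d < i → lam.rowLen i = μ.rowLen i := by
    intro i hi
    have h1 := rowLen_le h i
    by_contra hne'
    have hi' := (hrow i).2 (by omega)
    have := hamin i hi'
    have := hdmax i hi'
    omega
  have hshift : ∀ i, a ≤ i → i < d → lam.rowLen (i + 1) = μ.rowLen i + 1 := by
    intro i hai hid
    obtain ⟨j, hj1, hj2⟩ := exists_crossing_s11 hconn
      (mem_skew.2 ⟨le_rfl, ha'⟩) (mem_skew.2 ⟨le_rfl, hd'⟩) hai hid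
    have h1 := mem_skew.1 hj1
    have h2 := mem_skew.1 hj2
    by_contra hlt
    have m1 := μ.rowLen_anti _ _ (Nat.le_succ i)
    have m2 := lam.rowLen_anti _ _ (Nat.le_succ i)
    simp only [Nat.succ_eq_add_one] at m1 m2
    refine hsq i (μ.rowLen i) ⟨mem_skew.2 ?_, mem_skew.2 ?_, mem_skew.2 ?_, mem_skew.2 ?_⟩ <;>
      omega
  have himg : s.image Prod.fst = Finset.Icc a d := by
    ext i
    rw [Finset.mem_Icc]
    refine ⟨fun hi => ⟨hamin i hi, hdmax i hi⟩, fun ⟨h1, h2⟩ => ?_⟩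
    rcases h2.eq_or_lt with rfl | h2
    · exact hd
    · rw [hrow]
      have := hshift i h1 h2
      have := lam.rowLen_anti _ _ (Nat.le_succ i)
      simp only [Nat.succ_eq_add_one] at this
      omega
  have hsum : n = ∑ i ∈ Finset.Icc a d, (lam.rowLen i - μ.rowLen i) := by
    rw [← hcard, Finset.card_eq_sum_card_image Prod.fst s, himg]
    refine Finset.sum_congr rfl fun i _ => ?_
    rw [← Nat.card_Ico, ← Finset.card_map (s := Finset.Ico _ _)
      ⟨fun j => (i, j), fun x y hxy => (Prod.ext_iff.1 hxy).2⟩]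
    refine congrArg Finset.card ?_
    ext ⟨i', j⟩
    simp only [Finset.mem_filter, Finset.mem_map, Finset.mem_Ico]
    constructor
    · rintro ⟨hm, rfl⟩
      exact ⟨j, mem_skew.1 hm, rfl⟩
    · rintro ⟨j', hj, e⟩
      cases e
      exact ⟨mem_skew.2 hj, rfl⟩
  have htel : ∀ k, a + k ≤ d → lam.rowLen a + k =
      μ.rowLen (a + k) + ∑ i ∈ Finset.Icc a (a + k), (lam.rowLen i - μ.rowLen i) := by
    intro k
    induction k with
    | zero =>
      intro _
      simp only [add_zero, Finset.Icc_self, Finset.sum_singleton]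
      omega
    | succ k ih =>
      intro hk
      have h1 := ih (by omega)
      have h2 := hshift (a + k) (by omega) (by omega)
      have h3 := rowLen_le h (a + k + 1)
      rw [← add_assoc a, Finset.sum_Icc_succ_top (by omega)]
      omega
  refine ⟨a, d, had, hout, hshift, ha', hd', ?_, ?_⟩
  · have := htel (d - a) (by omega)
    rw [Nat.add_sub_cancel' had, ← hsum] at this
    omega
  · rw [spin, himg, Nat.card_Icc]
    omega

end Shape

/-! ### The boundary labels of a ribbon -/

lemma diagBoundary_eq_true {lam : YoungDiagram} {N C : ℕ} {c : Fin C} :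
    diagBoundary lam N C c = true ↔ ∃ t < N, lam.rowLen t + (N - t) = c.val + 1 := by
  simp [diagBoundary]

/-- Two rows of vertical labels differ by moving a single `∧` from (zero-based) column `p`
to column `p + n`, jumping over exactly `m` other labels `∧`. -/
structure IsJump (n m C p : ℕ) (top bot : Fin C → Bool) : Prop where
  lt : p + n < C
  top_start : ∀ c : Fin C, c.val = p → top c = true ∧ bot c = false
  top_end : ∀ c : Fin C, c.val = p + n → top c = false ∧ bot c = true
  other : ∀ c : Fin C, c.val ≠ p → c.val ≠ p + n → top c = bot c
  count : (Finset.univ.filter fun c : Fin C =>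
    (p < c.val ∧ c.val < p + n) ∧ bot c = true).card = m

/-- Adding an `n`-ribbon to `μ` moves one part of `μ + ρ` up by `n`; the number of parts
jumped over is the spin.  In terms of rows, the part that moves comes from the last row `d`
of the ribbon, ends up in its first row `a`, and the parts of rows `a, …, d - 1` are each
shifted down by one row. -/
lemma ribbon_isJump {n : ℕ} (hn : 1 ≤ n) {μ lam : YoungDiagram} (h : μ ≤ lam)
    (hrib : IsRibbon n (lam.cells \ μ.cells)) {N : ℕ} (hN : lam.colLen 0 ≤ N) :
    ∃ p, IsJump n (spin (lam.cells \ μ.cells)) (lam.rowLen 0 + N) p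
      (diagBoundary μ N (lam.rowLen 0 + N)) (diagBoundary lam N (lam.rowLen 0 + N)) := by
  obtain ⟨a, d, had, hout, hshift, ha, hd, htot, hspin⟩ := ribbon_rows hn h hrib
  have hdN : d < N := by
    have h1 : (d, 0) ∈ lam := YoungDiagram.mem_iff_lt_rowLen.2 (by omega)
    have h2 := YoungDiagram.mem_iff_lt_colLen.1 h1
    omega
  have hla := lam.rowLen_anti _ _ (Nat.zero_le a)
  -- the part of `μ + ρ` in row `d` is `p + 1`
  refine ⟨μ.rowLen d + (N - d) - 1, ?_, ?_, ?_, ?_, ?_⟩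
  · omega
  · intro c hc
    refine ⟨diagBoundary_eq_true.2 ⟨d, hdN, by omega⟩, ?_⟩
    rw [← Bool.not_eq_true, diagBoundary_eq_true]
    rintro ⟨t, ht, e⟩
    rcases le_or_gt t d with htd | htd
    · have := lam.rowLen_anti _ _ htd
      omega
    · have := μ.rowLen_anti _ _ htd.le
      have := hout t (Or.inr htd)
      omega
  · intro c hc
    refine ⟨?_, diagBoundary_eq_true.2 ⟨a, by omega, by omega⟩⟩
    rw [← Bool.not_eq_true, diagBoundary_eq_true]
    rintro ⟨t, ht, e⟩
    rcases le_or_gt a t with hta | hta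
    · have := μ.rowLen_anti _ _ hta
      omega
    · have := lam.rowLen_anti _ _ hta.le
      have := hout t (Or.inl hta)
      omega
  · intro c hc1 hc2
    rw [Bool.eq_iff_iff, diagBoundary_eq_true, diagBoundary_eq_true]
    constructor
    · rintro ⟨t, ht, e⟩
      by_cases hto : t < a ∨ d < t
      · exact ⟨t, ht, by rw [hout t hto]; exact e⟩
      · have htd : t ≠ d := by
          rintro rfl
          omega
        have := hshift t (by omega) (by omega)
        exact ⟨t + 1, by omega, by omega⟩
    · rintro ⟨t, ht, e⟩
      by_cases hto : t < a ∨ d < t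
      · exact ⟨t, ht, by rw [← hout t hto]; exact e⟩
      · have hta : t ≠ a := by
          rintro rfl
          omega
        obtain ⟨u, rfl⟩ : ∃ u, t = u + 1 := ⟨t - 1, by omega⟩
        have := hshift u (by omega) (by omega)
        exact ⟨u, by omega, by omega⟩
  · rw [hspin, ← Nat.card_Ioc a d]
    symm
    have hbound : ∀ t ∈ Finset.Ioc a d, lam.rowLen t + (N - t) - 1 < lam.rowLen 0 + N := by
      intro t _
      have := lam.rowLen_anti _ _ (Nat.zero_le t)
      omega
    refine Finset.card_bij (fun t ht => ⟨lam.rowLen t + (N - t) - 1, hbound t ht⟩) ?_ ?_ ?_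
    · intro t ht
      rw [Finset.mem_Ioc] at ht
      rw [Finset.mem_filter, diagBoundary_eq_true]
      have h1 := lam.rowLen_anti _ _ ht.1.le
      have h2 := lam.rowLen_anti _ _ ht.2
      dsimp only
      exact ⟨Finset.mem_univ _, ⟨by omega, by omega⟩, t, by omega, by omega⟩
    · intro t ht u hu e
      rw [Finset.mem_Ioc] at ht hu
      have e' := Fin.mk.inj_iff.1 e
      rcases lt_trichotomy t u with htu | htu | htu
      · have := lam.rowLen_anti _ _ htu.le
        omega
      · exact htu
      · have := lam.rowLen_anti _ _ htu.le
        omega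
    · intro c hc
      rw [Finset.mem_filter, diagBoundary_eq_true] at hc
      obtain ⟨-, ⟨hc1, hc2⟩, t, ht, e⟩ := hc
      refine ⟨t, Finset.mem_Ioc.2 ⟨?_, ?_⟩, Fin.ext (by dsimp only; omega)⟩
      · by_contra hta
        have := lam.rowLen_anti _ _ (not_lt.1 hta)
        omega
      · by_contra htd
        have := μ.rowLen_anti _ _ (not_le.1 htd).le
        have := hout t (Or.inr (not_le.1 htd))
        omega

/-! ### One-row states -/

section Row

variable {n m C p : ℕ} {top bot : Fin C → Bool}

/-- Admissible one-row states with the given vertical labels and `>` on both sides. -/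
def IsRowState (n C : ℕ) (top bot : Fin C → Bool) (st : GridState n 1 C) : Prop :=
  BoundaryCond top bot (fun _ _ => false) (fun _ _ => false) st ∧
    ∀ r : Fin 1, ∀ c : Fin C,
      VertexAdmissible n (st.1 r.castSucc c) (st.1 r.succ c)
        (st.2 r c.castSucc) (st.2 r c.succ)

/-- The state in which a single label `<` is emitted at column `p` in position `n`, moves
one position down at each step to the right, and is absorbed at column `p + n`. -/
def jumpState (n C p : ℕ) (top bot : Fin C → Bool) : GridState n 1 C :=
  (fun r => if r = 0 then top else bot, fun _ e k => decide (e.val + k.val = p + n))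

/-- Arrow conservation: the labels `∧` and `<` at the north and west are as many as those at
the south and east. -/
lemma classify_isSome_iff (a b c d : Bool) :
    (classify a b c d).isSome = true ↔
      a.toNat + c.toNat = b.toNat + d.toNat := by
  cases a <;> cases b <;> cases c <;> cases d <;> simp [classify]

lemma jumpState_isRowState (hn : 1 ≤ n) (hj : IsJump n m C p top bot) :
    IsRowState n C top bot (jumpState n C p top bot) := by
  have hC := hj.lt
  refine ⟨⟨rfl, rfl, fun r => ⟨?_, ?_⟩⟩, fun r c => ⟨hn, ?_, ?_⟩⟩
  · funext k
    have := k.isLt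
    exact decide_eq_false (by rw [Fin.val_zero]; omega)
  · funext k
    simp only [jumpState, Fin.val_last, decide_eq_false_iff_not]
    omega
  · intro k hk
    simp only [jumpState, Fin.val_succ, Fin.val_castSucc, decide_eq_decide]
    omega
  · have hr : r = 0 := Subsingleton.elim _ _
    subst hr
    rw [classify_isSome_iff]
    simp only [jumpState, Fin.castSucc_zero, if_true, Fin.val_succ, Fin.val_castSucc,
      Fin.succ_ne_zero, if_false]
    by_cases h1 : c.val = p
    · rw [(hj.top_start c h1).1, (hj.top_start c h1).2, decide_eq_false (by omega),
        decide_eq_true (by omega)]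
      rfl
    · by_cases h2 : c.val = p + n
      · rw [(hj.top_end c h2).1, (hj.top_end c h2).2, decide_eq_true (by omega),
          decide_eq_false (by omega)]
        rfl
      · rw [hj.other c h1 h2, decide_eq_false (by omega), decide_eq_false (by omega)]

/-- The horizontal labels are forced from left to right. -/
lemma eq_jumpState (hn : 1 ≤ n) (hj : IsJump n m C p top bot) {st : GridState n 1 C}
    (hst : IsRowState n C top bot st) : st = jumpState n C p top bot := by
  obtain ⟨⟨htop, hbot, hside⟩, hadm⟩ := hst
  have hbot' : st.1 (Fin.succ 0) = bot := hbot
  have key : ∀ e : ℕ, ∀ he : e < C + 1, ∀ k : Fin n,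
      st.2 0 ⟨e, he⟩ k = decide (e + k.val = p + n) := by
    intro e
    induction e with
    | zero =>
      intro he k
      have h0 : st.2 0 ⟨0, he⟩ = fun _ => false := (hside 0).1
      rw [h0, eq_comm, decide_eq_false_iff_not]
      omega
    | succ e ih =>
      intro he k
      have heC : e < C := by omega
      have ihe := ih (by omega)
      obtain ⟨_, hmove, hcl⟩ := hadm 0 ⟨e, heC⟩
      have hW : st.2 0 (Fin.castSucc ⟨e, heC⟩) = fun k => decide (e + k.val = p + n) :=
        funext ihe
      rw [hW] at hmove hcl
      rw [Fin.castSucc_zero, htop, hbot', classify_isSome_iff] at hcl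
      change st.2 0 (Fin.succ ⟨e, heC⟩) k = _
      by_cases hk : k.val + 1 < n
      · rw [hmove k hk, decide_eq_decide]
        dsimp only
        omega
      · have hkn : k = ⟨n - 1, Nat.sub_lt hn Nat.one_pos⟩ := Fin.ext (by dsimp only; omega)
        rw [hkn]
        dsimp only at hcl ⊢
        generalize st.2 0 (Fin.succ ⟨e, heC⟩) ⟨n - 1, _⟩ = v at hcl ⊢
        by_cases h1 : e = p
        · obtain ⟨t1, t2⟩ := hj.top_start ⟨e, heC⟩ h1
          rw [t1, t2, decide_eq_false (by omega)] at hcl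
          rw [decide_eq_true (by omega)]
          cases v <;> simp_all
        · by_cases h2 : e = p + n
          · obtain ⟨t1, t2⟩ := hj.top_end ⟨e, heC⟩ h2
            rw [t1, t2, decide_eq_true (by omega)] at hcl
            rw [decide_eq_false (by omega)]
            cases v <;> simp_all
          · rw [hj.other ⟨e, heC⟩ h1 h2, decide_eq_false (by omega)] at hcl
            rw [decide_eq_false (by omega)]
            cases v <;> simp_all
  refine Prod.ext ?_ ?_
  · funext r
    fin_cases r
    · exact htop
    · exact hbot
  · funext r e k
    have hr : r = 0 := Subsingleton.elim _ _
    subst hr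
    exact key e.val e.isLt k

/-- In `jumpState`, the travelling `<` is counted by `s(v)` precisely at the columns
strictly between `p` and `p + n`. -/
lemma card_label (c : ℕ) :
    (Finset.univ.filter fun k : Fin n =>
      k.val < n - 1 ∧ decide (c + 1 + k.val = p + n) = true).card =
      if p < c ∧ c < p + n then 1 else 0 := by
  simp only [decide_eq_true_eq]
  split_ifs with h
  · rw [Finset.card_eq_one]
    refine ⟨⟨p + n - (c + 1), by omega⟩, ?_⟩
    ext k
    simp only [Finset.mem_filter, Finset.mem_univ, true_and, Finset.mem_singleton, Fin.ext_iff]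
    omega
  · rw [Finset.card_eq_zero, Finset.filter_eq_empty_iff]
    intro k _
    omega

/-- Both weight tables satisfy the four hypotheses; `SE` and `NE` never occur in
`jumpState`. -/
lemma stateWeight_jumpState {R : Type*} [CommRing R] (hn : 1 ≤ n)
    (hj : IsJump n m C p top bot) (q z : R) (tab : VertexType → ℕ → R)
    (hSW : ∀ s, tab .SW s = q ^ s) (hNS : tab .NS 0 = 1) (hNW : ∀ s, tab .NW s = 1)
    (hEW : tab .EW 0 = z) :
    stateWeight n 1 C (fun _ => tab) (jumpState n C p top bot) = q ^ m * z := by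
  have hC := hj.lt
  have hv : ∀ c : Fin C, vertexWeight n tab (top c) (bot c)
      (fun k => decide (c.val + k.val = p + n)) (fun k => decide (c.val + 1 + k.val = p + n)) =
      (if (p < c.val ∧ c.val < p + n) ∧ bot c = true then q else 1) *
        (if c = ⟨p, by omega⟩ then z else 1) := by
    intro c
    have hmove : ∀ k : Fin n, ∀ hk : k.val + 1 < n,
        decide (c.val + 1 + k.val = p + n) =
          decide (c.val + (⟨k.val + 1, hk⟩ : Fin n).val = p + n) := by
      intro k hk
      rw [decide_eq_decide]
      dsimp only
      omega
    rw [vertexWeight, dif_pos (show 0 < n from hn), if_pos hmove, card_label]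
    simp only [Fin.ext_iff]
    by_cases h1 : c.val = p
    · rw [(hj.top_start c h1).1, (hj.top_start c h1).2, decide_eq_false (by omega),
        decide_eq_true (by omega), if_neg (by omega), if_neg (by simp), if_pos h1]
      simp only [classify]
      rw [hEW, one_mul]
    · by_cases h2 : c.val = p + n
      · rw [(hj.top_end c h2).1, (hj.top_end c h2).2, decide_eq_true (by omega),
          decide_eq_false (by omega), if_neg (by omega), if_neg (by omega), if_neg h1]
        simp only [classify]
        rw [hNS, one_mul]
      · rw [hj.other c h1 h2, decide_eq_false (by omega), decide_eq_false (by omega), if_neg h1]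
        cases hb : bot c
        · simp [classify, hNW]
        · simp only [classify, hSW, and_true, mul_one]
          split_ifs <;> simp
  have hw : stateWeight n 1 C (fun _ => tab) (jumpState n C p top bot) =
      ∏ c : Fin C, vertexWeight n tab (top c) (bot c)
        (fun k => decide (c.val + k.val = p + n))
        (fun k => decide (c.val + 1 + k.val = p + n)) := by
    rw [stateWeight, Fin.prod_univ_one]
    rfl
  rw [hw, Finset.prod_congr rfl fun c _ => hv c, Finset.prod_mul_distrib, Finset.prod_ite_eq',
    if_pos (Finset.mem_univ _), Finset.prod_ite, Finset.prod_const, Finset.prod_const_one,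
    mul_one, hj.count]

lemma vertexWeight_eq_zero {R : Type*} [CommRing R] {tab : VertexType → ℕ → R}
    {vN vS : Bool} {vW vE : Fin n → Bool} (h : ¬VertexAdmissible n vN vS vW vE) :
    vertexWeight n tab vN vS vW vE = 0 := by
  unfold vertexWeight
  split_ifs with h0 h1
  · cases hcl : classify vN vS (vW ⟨0, h0⟩) (vE ⟨n - 1, Nat.sub_lt h0 Nat.one_pos⟩) with
    | none => rfl
    | some ty => exact absurd ⟨h0, h1, by rw [hcl]; rfl⟩ h
  · rfl
  · rfl

/-- States with an inadmissible vertex do not contribute, so `jumpState` alone does. -/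
lemma partitionZ_eq {R : Type*} [CommRing R] (hn : 1 ≤ n)
    (hj : IsJump n m C p top bot) (tab : VertexType → ℕ → R) :
    partitionZ n 1 C (fun _ => tab) top bot (fun _ _ => false) (fun _ _ => false) =
      stateWeight n 1 C (fun _ => tab) (jumpState n C p top bot) := by
  classical
  rw [partitionZ]
  refine Finset.sum_eq_single _ ?_ ?_
  · intro st hst hne
    have hbc := (Finset.mem_filter.1 hst).2
    have hna : ¬∀ r : Fin 1, ∀ c : Fin C,
        VertexAdmissible n (st.1 r.castSucc c) (st.1 r.succ c)
          (st.2 r c.castSucc) (st.2 r c.succ) :=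
      fun hadm => hne (eq_jumpState hn hj ⟨hbc, hadm⟩)
    push Not at hna
    obtain ⟨r, c, hrc⟩ := hna
    exact Finset.prod_eq_zero (Finset.mem_univ r)
      (Finset.prod_eq_zero (Finset.mem_univ c) (vertexWeight_eq_zero hrc))
  · intro hnot
    exact absurd (Finset.mem_filter.2
      ⟨Finset.mem_univ _, (jumpState_isRowState hn hj).1⟩) hnot

end Row

/-- **Single-ribbon one-row lattice model** (Lemma `lem:ribbonbij`).
Let `n ≥ 1` and let `lam/μ` be a skew shape which is a single `n`-ribbon, and let `N` be
at least the number of parts of `lam`.  Then the one-row `n`-ribbon lattice model with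
boundary condition `B_{lam/μ}` has exactly one admissible state; with horizontal-strip
weights and spectral parameter `x` its weight is `q^{spin(lam/μ)} · x`, and with
vertical-strip weights and parameter `y` its weight is `q^{spin(lam/μ)} · (-y)`.
In particular the partition function equals `q^{spin} x`, resp. `q^{spin} (-y)`. -/
theorem oneRow_single_ribbon (n : ℕ) (hn : 1 ≤ n) (μ lam : YoungDiagram)
    (hμlam : μ ≤ lam) (hrib : IsRibbon n (lam.cells \ μ.cells))
    (N : ℕ) (hN : lam.colLen 0 ≤ N) :
    (∃! st : GridState n 1 (lam.rowLen 0 + N),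
        BoundaryCond (diagBoundary μ N (lam.rowLen 0 + N))
            (diagBoundary lam N (lam.rowLen 0 + N))
            (fun _ _ => false) (fun _ _ => false) st ∧
          ∀ r : Fin 1, ∀ c : Fin (lam.rowLen 0 + N),
            VertexAdmissible n (st.1 r.castSucc c) (st.1 r.succ c)
              (st.2 r c.castSucc) (st.2 r c.succ)) ∧
    (∀ (R : Type) [CommRing R], ∀ q x : R,
        ∀ st : GridState n 1 (lam.rowLen 0 + N),
          (BoundaryCond (diagBoundary μ N (lam.rowLen 0 + N))
              (diagBoundary lam N (lam.rowLen 0 + N))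
              (fun _ _ => false) (fun _ _ => false) st ∧
            ∀ r : Fin 1, ∀ c : Fin (lam.rowLen 0 + N),
              VertexAdmissible n (st.1 r.castSucc c) (st.1 r.succ c)
                (st.2 r c.castSucc) (st.2 r c.succ)) →
          stateWeight n 1 (lam.rowLen 0 + N) (fun _ => horizTable q x) st =
            q ^ spin (lam.cells \ μ.cells) * x) ∧
    (∀ (R : Type) [CommRing R], ∀ q y : R,
        ∀ st : GridState n 1 (lam.rowLen 0 + N),
          (BoundaryCond (diagBoundary μ N (lam.rowLen 0 + N))
              (diagBoundary lam N (lam.rowLen 0 + N))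
              (fun _ _ => false) (fun _ _ => false) st ∧
            ∀ r : Fin 1, ∀ c : Fin (lam.rowLen 0 + N),
              VertexAdmissible n (st.1 r.castSucc c) (st.1 r.succ c)
                (st.2 r c.castSucc) (st.2 r c.succ)) →
          stateWeight n 1 (lam.rowLen 0 + N) (fun _ => vertTable q y) st =
            q ^ spin (lam.cells \ μ.cells) * (-y)) ∧
    (∀ (R : Type) [CommRing R], ∀ q x : R,
        partitionZ n 1 (lam.rowLen 0 + N) (fun _ => horizTable q x)
            (diagBoundary μ N (lam.rowLen 0 + N)) (diagBoundary lam N (lam.rowLen 0 + N))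
            (fun _ _ => false) (fun _ _ => false) =
          q ^ spin (lam.cells \ μ.cells) * x) ∧
    (∀ (R : Type) [CommRing R], ∀ q y : R,
        partitionZ n 1 (lam.rowLen 0 + N) (fun _ => vertTable q y)
            (diagBoundary μ N (lam.rowLen 0 + N)) (diagBoundary lam N (lam.rowLen 0 + N))
            (fun _ _ => false) (fun _ _ => false) =
          q ^ spin (lam.cells \ μ.cells) * (-y)) := by
  obtain ⟨p, hj⟩ := ribbon_isJump hn hμlam hrib hN
  have hhoriz : ∀ (R : Type) [CommRing R], ∀ q x : R,
      stateWeight n 1 (lam.rowLen 0 + N) (fun _ => horizTable q x) (jumpState n _ p _ _) =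
        q ^ spin (lam.cells \ μ.cells) * x := fun R _ q x =>
    stateWeight_jumpState hn hj q x (horizTable q x) (fun _ => rfl) (by simp [horizTable])
      (fun _ => rfl) (by simp [horizTable])
  have hvert : ∀ (R : Type) [CommRing R], ∀ q y : R,
      stateWeight n 1 (lam.rowLen 0 + N) (fun _ => vertTable q y) (jumpState n _ p _ _) =
        q ^ spin (lam.cells \ μ.cells) * (-y) := fun R _ q y =>
    stateWeight_jumpState hn hj q (-y) (vertTable q y) (fun _ => rfl) rfl (fun _ => rfl) rfl
  refine ⟨⟨_, jumpState_isRowState hn hj, fun st hst => eq_jumpState hn hj hst⟩, ?_, ?_, ?_, ?_⟩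
  · intro R _ q x st hst
    rw [eq_jumpState hn hj hst]
    exact hhoriz R q x
  · intro R _ q y st hst
    rw [eq_jumpState hn hj hst]
    exact hvert R q y
  · intro R _ q x
    rw [partitionZ_eq hn hj]
    exact hhoriz R q x
  · intro R _ q y
    rw [partitionZ_eq hn hj]
    exact hvert R q y


end SuperLLT
end
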